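/- The number of rooted planar maps with n edges is M_n = 2·3^n·(2n)!/((n+2)!·n!). -/

import Mathlib

/-- The number of cycles (including fixed points) of a permutation of `Fin m`. -/
def numCycles {m : ℕ} (f : Equiv.Perm (Fin m)) : ℕ :=
  m - f.cycleType.sum + f.cycleType.card

/-- A rooted (combinatorial, planar) map with `n` edges, encoded by a rotation
system on the `2n` darts (oriented edges): `σ` is the counterclockwise rotation
of darts around their tail vertex, `α` is the fixed-point-free involution pairing
the two darts of each edge, the group `⟨σ, α⟩` acts transitively on darts
(connectedness), Euler's formula `V - E + F = 2` holds (planarity, i.e. genus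
zero), and `root` is the distinguished root dart.  Vertices are the cycles of
`σ`, edges the cycles of `α`, faces the cycles of `σ * α`.  Isomorphism classes
of such structures (for `n ≥ 1`) are exactly rooted planar maps with `n` edges,
considered up to orientation-preserving homeomorphisms of the plane. -/
structure RMap (n : ℕ) where
  σ : Equiv.Perm (Fin (2 * n))
  α : Equiv.Perm (Fin (2 * n))
  root : Fin (2 * n)
  inv : ∀ d, α (α d) = d
  fpf : ∀ d, α d ≠ d
  conn : ∀ d e : Fin (2 * n),
    ∃ g ∈ Subgroup.closure ({σ, α} : Set (Equiv.Perm (Fin (2 * n)))), g d = e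
  euler : numCycles σ + numCycles (σ * α) = n + 2

/-- Root-preserving isomorphism of rooted maps: a relabelling of the darts
conjugating the rotation systems and preserving the root dart. -/
def RMapIso {n : ℕ} (M M' : RMap n) : Prop :=
  ∃ e : Equiv.Perm (Fin (2 * n)),
    (∀ d, e (M.σ d) = M'.σ (e d)) ∧ (∀ d, e (M.α d) = M'.α (e d)) ∧
      e M.root = M'.root

/-- The number of rooted planar maps with `n` edges: the number of isomorphism
classes of rooted map structures (with the convention that the trivial map is
the unique map with `0` edges). -/
noncomputable def mapCount (n : ℕ) : ℕ :=
  if n = 0 then 1 else Nat.card (Quot (@RMapIso n))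

/-- A rooted map is separable if its edge set can be partitioned into two
nonempty parts such that exactly one vertex is incident to edges of both parts.
Here an edge set is an `α`-invariant set `S` of darts, a vertex is a cycle of
`σ`, and a vertex is incident to an edge of `S` iff its `σ`-cycle meets `S`. -/
def RMap.Separable {n : ℕ} (M : RMap n) : Prop :=
  ∃ S : Finset (Fin (2 * n)), S.Nonempty ∧ Sᶜ.Nonempty ∧
    (∀ d ∈ S, M.α d ∈ S) ∧
    ∃ d₀ : Fin (2 * n),
      ((∃ a ∈ S, M.σ.SameCycle d₀ a) ∧ (∃ b ∈ Sᶜ, M.σ.SameCycle d₀ b)) ∧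
      ∀ d : Fin (2 * n), (∃ a ∈ S, M.σ.SameCycle d a) →
        (∃ b ∈ Sᶜ, M.σ.SameCycle d b) → M.σ.SameCycle d₀ d

/-- The number of rooted 2-connected (i.e. non-separable) planar maps with `k`
edges, with the convention `C 0 = 1`. -/
noncomputable def bconnCount (k : ℕ) : ℕ :=
  if k = 0 then 1
  else Nat.card (Quot (fun M M' : {M : RMap k // ¬ M.Separable} => RMapIso M.1 M'.1))

open Polynomial in
/-- The generating polynomial of rooted planar maps with `n` edges, counted by the degree `k` of the
root face with weight `(1 + X) ^ k`, as given by Tutte's recursion. -/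
noncomputable def tuttePoly : ℕ → ℤ[X]
  | 0 => 1
  | n + 1 => (1 + X) ^ 2 * ∑ i : Fin (n + 1), tuttePoly i * tuttePoly (n - i) +
      (1 + X) * divX ((1 + X) * tuttePoly n)

theorem tuttePoly_zero : tuttePoly 0 = 1 := by
  rw [tuttePoly]

open Polynomial in
theorem tuttePoly_succ (n : ℕ) :
    tuttePoly (n + 1) =
      (1 + X) ^ 2 * ∑ p ∈ Finset.HasAntidiagonal.antidiagonal n, tuttePoly p.1 * tuttePoly p.2 +
        (1 + X) * divX ((1 + X) * tuttePoly n) := by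
  rw [tuttePoly, Finset.Nat.sum_antidiagonal_eq_sum_range_succ
      (fun i j => tuttePoly i * tuttePoly j),
    Finset.sum_range]

/-- The algebraic parametrization of the solution of Tutte's functional equation. -/
theorem tutte_equation_of_parametrization {R : Type*} [CommRing R] {z a H v M : R}
    (ha : a = 1 + 3 * z * a ^ 2)
    (hH : H = z * ((a + (1 + v) * H) * (3 * a + v * (a + (1 + v) * H))))
    (hM : M = a - z * a ^ 2 + (v - z * a * (1 + v)) * H) :
    4 * z * (1 + v) ^ 2 * v * (v * M) =
      4 * z * (1 + v) ^ 2 * v *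
        (v + z * (1 + v) ^ 2 * v * M ^ 2 + z * (1 + v) * ((1 + v) * M - (a - z * a ^ 3))) := by
  have hD : (z * (1 + v) ^ 2 - v) ^ 2 -
      4 * z * (1 + v) ^ 2 * v * (v - z * (1 + v) * (a - z * a ^ 3))
      = (v - z * a * (1 + v)) ^ 2 * (1 - 2 * z * a * (1 + v) - z * (a + 3) * (1 + v) ^ 2) := by
    grind
  have hA : 2 * z * (1 + v) ^ 2 * v * M + z * (1 + v) ^ 2 - v =
      -(v - z * a * (1 + v)) * (1 - z * (1 + v) * (a + (1 + v) * (2 * a + 2 * v * H))) := by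
    rw [hM]
    linear_combination (-z * (1 + v) ^ 2) * ha
  have hQ : (1 - z * (1 + v) * (a + (1 + v) * (2 * a + 2 * v * H))) ^ 2 =
      1 - 2 * z * a * (1 + v) - z * (a + 3) * (1 + v) ^ 2 := by
    linear_combination (z * (1 + v) ^ 2) * (-3 * ha - 4 * v * hH)
  have := congrArg (· ^ 2) hA
  simp only [mul_pow, neg_sq, hQ, ← hD] at this
  linear_combination -this

/-- A self-map of a power series ring that is compatible with the `X`-adic congruences has,
after multiplication by `X`, a fixed point. -/
theorem PowerSeries.exists_eq_X_mul {R : Type*} [CommRing R] (Φ : PowerSeries R → PowerSeries R)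
    (hΦ : ∀ f g, f - g ∣ Φ f - Φ g) : ∃ H, H = PowerSeries.X * Φ H := by
  let s : ℕ → PowerSeries R := fun k => (fun f => PowerSeries.X * Φ f)^[k] 0
  have hs : ∀ k, s (k + 1) = PowerSeries.X * Φ (s k) := fun k =>
    Function.iterate_succ_apply' _ _ _
  have hstep : ∀ f g : PowerSeries R, ∀ n, PowerSeries.X ^ n ∣ f - g →
      PowerSeries.X ^ (n + 1) ∣ PowerSeries.X * Φ f - PowerSeries.X * Φ g := by
    intro f g n h
    rw [pow_succ', ← mul_sub]
    exact mul_dvd_mul_left _ (h.trans (hΦ f g))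
  have hcauchy : ∀ n, PowerSeries.X ^ n ∣ s (n + 1) - s n := by
    intro n
    induction n with
    | zero => simp
    | succ n ih =>
      rw [hs (n + 1), hs n]
      rw [hs n] at ih
      simpa [hs n] using hstep _ _ n ih
  have hcauchy' : ∀ n k, PowerSeries.X ^ n ∣ s (n + k) - s n := by
    intro n k
    induction k with
    | zero => simp
    | succ k ih =>
      have h1 : PowerSeries.X ^ n ∣ s (n + k + 1) - s (n + k) :=
        (pow_dvd_pow _ (Nat.le_add_right n k)).trans (hcauchy (n + k))
      have := dvd_add h1 ih
      rwa [sub_add_sub_cancel] at this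
  refine ⟨PowerSeries.mk fun n => PowerSeries.coeff n (s (n + 1)), ?_⟩
  set H := PowerSeries.mk fun n => PowerSeries.coeff n (s (n + 1)) with hH
  have hlim : ∀ n, PowerSeries.X ^ n ∣ H - s n := by
    intro n
    rw [PowerSeries.X_pow_dvd_iff]
    intro m hm
    obtain ⟨k, rfl⟩ := Nat.exists_eq_add_of_lt hm
    have h2 : PowerSeries.X ^ (m + 1) ∣ s (m + k + 1) - s (m + 1) := by
      have := hcauchy' (m + 1) k
      rwa [show m + 1 + k = m + k + 1 by ring] at this
    have h3 := PowerSeries.X_pow_dvd_iff.1 h2 m (Nat.lt_succ_self m)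
    rw [map_sub, sub_eq_zero] at h3 ⊢
    simp [hH, h3]
  ext n
  rw [← sub_eq_zero, ← map_sub]
  have h1 := hlim (n + 1)
  have h2 := hstep _ _ n (hlim n)
  rw [hs] at h1
  have := dvd_sub h1 h2
  rw [sub_sub_sub_cancel_right] at this
  exact PowerSeries.X_pow_dvd_iff.1 this n (Nat.lt_succ_self n)

/-- The series `∑ 3 ^ n * catalan n * z ^ n`. -/
noncomputable def scaledCatalan : PowerSeries ℤ :=
  PowerSeries.mk fun n => 3 ^ n * (catalan n : ℤ)

theorem scaledCatalan_eq :
    scaledCatalan = 1 + 3 * PowerSeries.X * scaledCatalan ^ 2 := by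
  ext n
  have h3 : (3 : PowerSeries ℤ) = PowerSeries.C 3 := by simp
  rw [mul_assoc, h3]
  cases n with
  | zero => simp [scaledCatalan]
  | succ n =>
    rw [map_add, PowerSeries.coeff_C_mul, PowerSeries.coeff_succ_X_mul, sq,
      PowerSeries.coeff_mul, PowerSeries.coeff_one]
    simp only [scaledCatalan, PowerSeries.coeff_mk, catalan_succ']
    push_cast
    rw [Finset.mul_sum, Finset.mul_sum, zero_add]
    refine Finset.sum_congr rfl fun p hp => ?_
    rw [← Finset.HasAntidiagonal.mem_antidiagonal.1 hp]
    ring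

open Polynomial in
/-- The total weight of rooted planar maps with `n` edges, as predicted by Tutte's recursion. -/
theorem three_mul_coeff_zero_tuttePoly (n : ℕ) :
    3 * (tuttePoly n).coeff 0 = 4 * 3 ^ n * (catalan n : ℤ) - 3 ^ n * (catalan (n + 1) : ℤ) := by
  set φ : PowerSeries ℤ →+* PowerSeries ℤ[X] := PowerSeries.map Polynomial.C with hφ
  set a := φ scaledCatalan with hadef
  set z : PowerSeries ℤ[X] := PowerSeries.X with hz
  set v : PowerSeries ℤ[X] := PowerSeries.C X with hv
  set M₁ : PowerSeries ℤ := scaledCatalan - PowerSeries.X * scaledCatalan ^ 3 with hM₁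
  have hφX : φ PowerSeries.X = z := by simp [hφ, hz]
  have ha : a = 1 + 3 * z * a ^ 2 := by
    conv_lhs => rw [hadef, scaledCatalan_eq]
    have h3 : φ 3 = 3 := map_ofNat φ 3
    simp [hφX, hadef, h3]
  obtain ⟨H, hH⟩ := PowerSeries.exists_eq_X_mul
    (fun H : PowerSeries ℤ[X] => (a + (1 + v) * H) * (3 * a + v * (a + (1 + v) * H)))
    (fun f g => ⟨(1 + v) * (3 * a + v * (a + (1 + v) * f)) + (a + (1 + v) * g) * (v * (1 + v)),
      by ring⟩)
  set M := a - z * a ^ 2 + (v - z * a * (1 + v)) * H with hM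
  have heq := tutte_equation_of_parametrization ha hH hM
  clear_value M
  have h1v : (1 + v : PowerSeries ℤ[X]) ≠ 0 := by
    intro h
    have := congrArg (fun f => (PowerSeries.coeff 0 f).coeff 0) h
    simp [hv] at this
  have hv0 : v ≠ 0 := by
    intro h
    have := congrArg (fun f => (PowerSeries.coeff 0 f).coeff 1) h
    simp [hv] at this
  have hz0 : z ≠ 0 := PowerSeries.X_ne_zero
  have h4 : (4 : PowerSeries ℤ[X]) ≠ 0 := by
    intro h
    have := congrArg (fun f => (PowerSeries.coeff 0 f).coeff 0) h
    have h4' : (4 : PowerSeries ℤ[X]) = PowerSeries.C (Polynomial.C 4) := by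
      rw [map_ofNat, map_ofNat]
    simp [h4'] at this
  replace heq := mul_left_cancel₀ (by positivity) heq
  have hM₁a : a - z * a ^ 3 = φ M₁ := by simp [hM₁, hφX, hadef]
  rw [hM₁a] at heq
  have h0 : PowerSeries.coeff 0 M = 1 := by
    have := congrArg (PowerSeries.coeff 0) heq
    simp only [mul_assoc, map_add, hv, hz, PowerSeries.coeff_C_mul,
      PowerSeries.coeff_zero_X_mul] at this
    exact mul_left_cancel₀ (a := (X : ℤ[X])) X_ne_zero (by simpa using this)
  have hsucc : ∀ k, X * PowerSeries.coeff (k + 1) M =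
      (1 + X) ^ 2 * (X * ∑ p ∈ Finset.HasAntidiagonal.antidiagonal k,
        PowerSeries.coeff p.1 M * PowerSeries.coeff p.2 M)
      + (1 + X) * ((1 + X) * PowerSeries.coeff k M - Polynomial.C (PowerSeries.coeff k M₁)) := by
    intro k
    have h1C : (1 + v : PowerSeries ℤ[X]) = PowerSeries.C (1 + X) := by simp [hv]
    have heq' : PowerSeries.C X * M = PowerSeries.C X +
        PowerSeries.X * (PowerSeries.C ((1 + X) ^ 2) * (PowerSeries.C X * (M * M))) +
        PowerSeries.X * (PowerSeries.C (1 + X) * (PowerSeries.C (1 + X) * M - φ M₁)) := by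
      rw [map_pow, ← h1C, ← hv, ← hz]
      linear_combination heq
    have := congrArg (PowerSeries.coeff (k + 1)) heq'
    rw [PowerSeries.coeff_C_mul, map_add, map_add, PowerSeries.coeff_succ_X_mul,
      PowerSeries.coeff_succ_X_mul, PowerSeries.coeff_C_mul, PowerSeries.coeff_C_mul,
      PowerSeries.coeff_mul, PowerSeries.coeff_C_mul, map_sub, PowerSeries.coeff_C_mul,
      PowerSeries.coeff_C, if_neg (Nat.succ_ne_zero k), zero_add, hφ, PowerSeries.coeff_map] at this
    exact this
  have hc : ∀ k, (PowerSeries.coeff k M).coeff 0 = PowerSeries.coeff k M₁ := by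
    intro k
    have := congrArg (Polynomial.eval 0) (hsucc k)
    simp only [eval_mul, eval_add, eval_sub, eval_X, eval_C, eval_one, eval_pow, zero_mul,
      mul_zero, zero_add, add_zero, one_mul, ← Polynomial.coeff_zero_eq_eval_zero] at this
    linarith
  have hG : ∀ k, PowerSeries.coeff k M = tuttePoly k := by
    intro k
    induction k using Nat.strong_induction_on with
    | _ k ih =>
      cases k with
      | zero => rw [h0, tuttePoly_zero]
      | succ k =>
        refine mul_left_cancel₀ (a := (X : ℤ[X])) X_ne_zero ?_
        have hsum : ∑ p ∈ Finset.HasAntidiagonal.antidiagonal k,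
            PowerSeries.coeff p.1 M * PowerSeries.coeff p.2 M
            = ∑ p ∈ Finset.HasAntidiagonal.antidiagonal k, tuttePoly p.1 * tuttePoly p.2 := by
          refine Finset.sum_congr rfl fun p hp => ?_
          have := Finset.HasAntidiagonal.mem_antidiagonal.1 hp
          rw [ih p.1 (by omega), ih p.2 (by omega)]
        rw [hsucc, hsum, ← hc k, ih k (by omega), tuttePoly_succ]
        have hd := divX_mul_X_add ((1 + X) * tuttePoly k)
        have hcf : ((1 + X) * tuttePoly k).coeff 0 = (tuttePoly k).coeff 0 := by
          simp [mul_coeff_zero]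
        rw [hcf] at hd
        linear_combination (-(1 + X)) * hd
  rw [← hG n, hc n]
  have hrel : PowerSeries.X * (PowerSeries.C 9 * M₁) =
      PowerSeries.X * (PowerSeries.C 12 * scaledCatalan)
      - scaledCatalan + 1 := by
    have h := scaledCatalan_eq
    have h9 : (PowerSeries.C 9 : PowerSeries ℤ) = 9 := by simp
    have h12 : (PowerSeries.C 12 : PowerSeries ℤ) = 12 := by simp
    rw [hM₁, h9, h12]
    linear_combination (3 * PowerSeries.X * scaledCatalan + 1) * h
  have := congrArg (PowerSeries.coeff (n + 1)) hrel
  simp only [map_add, map_sub, PowerSeries.coeff_succ_X_mul, PowerSeries.coeff_C_mul, scaledCatalan,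
    PowerSeries.coeff_mk, PowerSeries.coeff_one, Nat.succ_ne_zero, if_false] at this
  rw [pow_succ] at this
  linarith

theorem coeff_zero_tuttePoly_mul (n : ℕ) :
    (tuttePoly n).coeff 0 * ((n + 2).factorial * n.factorial : ℕ) =
      (2 * 3 ^ n * (2 * n).factorial : ℕ) := by
  have hcat : ∀ m : ℕ, (m + 1) * catalan m * (m.factorial * m.factorial) = (2 * m).factorial := by
    intro m
    rw [succ_mul_catalan_eq_centralBinom, Nat.centralBinom]
    have := Nat.choose_mul_factorial_mul_factorial (n := 2 * m) (k := m) (by omega)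
    rw [show 2 * m - m = m by omega] at this
    rw [← this, mul_assoc]
  have h0 := hcat n
  have h1 := hcat (n + 1)
  have h3 := three_mul_coeff_zero_tuttePoly n
  rw [show 2 * (n + 1) = 2 * n + 1 + 1 by ring, Nat.factorial_succ (2 * n + 1),
    Nat.factorial_succ (2 * n), Nat.factorial_succ n] at h1
  rw [Nat.factorial_succ (n + 1), Nat.factorial_succ n]
  zify at h0 h1 ⊢
  have hn : (n + 1 : ℤ) ≠ 0 := by positivity
  have hn' : (3 * (n + 1) : ℤ) ≠ 0 := by positivity
  refine mul_left_cancel₀ hn' ?_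
  have e1 : 3 * ((n : ℤ) + 1) * ((tuttePoly n).coeff 0 *
      ((n + 1 + 1) * ((n + 1) * n.factorial) * n.factorial)) =
    ((n : ℤ) + 1) * ((n + 1 + 1) * ((n + 1) * n.factorial) * n.factorial) *
      (3 * (tuttePoly n).coeff 0) := by ring
  rw [e1, h3]
  linear_combination (4 * 3 ^ n * ((n : ℤ) + 1) * (n + 2)) * h0 - 3 ^ n * h1

namespace PlanarMap

open Equiv Equiv.Perm

/-- A set is invariant under a family of permutations. -/
def Inv {X : Type*} (G : Set (Perm X)) (S : Set X) : Prop :=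
  ∀ g ∈ G, ∀ x, g x ∈ S ↔ x ∈ S

/-- Two points lie in the same orbit if no invariant set separates them. -/
def orbitSetoid {X : Type*} (G : Set (Perm X)) : Setoid X where
  r x y := ∀ S, Inv G S → (x ∈ S ↔ y ∈ S)
  iseqv := ⟨fun _ _ _ => Iff.rfl, fun h S hS => (h S hS).symm,
    fun h h' S hS => (h S hS).trans (h' S hS)⟩

/-- The number of orbits of a family of permutations. -/
noncomputable def orb {X : Type*} (G : Set (Perm X)) : ℕ :=
  Nat.card (Quotient (orbitSetoid G))

section Orbits

variable {X Y : Type*}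

theorem inv_singleton {f : Perm X} {S : Set X} : Inv {f} S ↔ ∀ x, f x ∈ S ↔ x ∈ S := by
  simp [Inv]

theorem inv_pair {f g : Perm X} {S : Set X} : Inv {f, g} S ↔ Inv {f} S ∧ Inv {g} S := by
  simp [Inv]

theorem Inv.compl {G : Set (Perm X)} {S : Set X} (h : Inv G S) : Inv G Sᶜ :=
  fun g hg x => not_congr (h g hg x)

theorem Inv.symmDiff {G : Set (Perm X)} {S T : Set X} (hS : Inv G S) (hT : Inv G T) :
    Inv G (symmDiff S T) := by
  intro g hg x
  simp only [Set.mem_symmDiff, hS g hg x, hT g hg x]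

theorem Inv.mul {f g : Perm X} {S : Set X} (hf : Inv {f} S) (hg : Inv {g} S) : Inv {f * g} S := by
  rw [inv_singleton] at *
  intro x
  rw [Perm.mul_apply, hf, hg]

theorem inv_singleton_of_forall_mem [Finite X] {f : Perm X} {S : Set X}
    (h : ∀ x ∈ S, f x ∈ S) : Inv {f} S := by
  rw [inv_singleton]
  have himg : f '' S = S :=
    Set.eq_of_subset_of_ncard_le (Set.image_subset_iff.2 h)
      (Set.ncard_image_of_injective S f.injective).ge (Set.toFinite S)
  intro x
  conv_lhs => rw [← himg]
  exact f.injective.mem_set_image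

theorem inv_swap [DecidableEq X] {x y : X} {S : Set X} : Inv {swap x y} S ↔ (x ∈ S ↔ y ∈ S) := by
  rw [inv_singleton]
  constructor
  · intro h
    simpa using (h y)
  · intro h z
    by_cases hx : z = x
    · subst hx; simp [h]
    · by_cases hy : z = y
      · subst hy; simp [h]
      · rw [swap_apply_of_ne_of_ne hx hy]

theorem card_inv [Finite X] (G : Set (Perm X)) : Nat.card {S // Inv G S} = 2 ^ orb G := by
  have e : {S // Inv G S} ≃ Set (Quotient (orbitSetoid G)) :=
    { toFun := fun S => {q | Quotient.liftOn q (· ∈ S.1) fun a b h => propext (h S.1 S.2)}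
      invFun := fun T => ⟨{x | Quotient.mk _ x ∈ T}, fun g hg x => by
        have : Quotient.mk (orbitSetoid G) (g x) = Quotient.mk (orbitSetoid G) x :=
          Quotient.sound fun S hS => hS g hg x
        simp only [Set.mem_ofPred_eq, this]⟩
      left_inv := fun S => by ext x; simp
      right_inv := fun T => by
        ext q
        induction q using Quotient.inductionOn
        simp }
  rw [Nat.card_congr e]
  have := Fintype.ofFinite (Quotient (orbitSetoid G))
  classical
  rw [Nat.card_eq_fintype_card, Fintype.card_set, orb, Nat.card_eq_fintype_card]

theorem orb_eq_of_equiv [Finite X] [Finite Y] {G : Set (Perm X)} {G' : Set (Perm Y)}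
    (e : {S // Inv G S} ≃ {S // Inv G' S}) : orb G = orb G' :=
  Nat.pow_right_injective le_rfl (by
    simpa only [card_inv] using Nat.card_congr e)

theorem orb_congr {G G' : Set (Perm X)} (h : ∀ S, Inv G S ↔ Inv G' S) : orb G = orb G' := by
  have : orbitSetoid G = orbitSetoid G' := by
    ext x y
    exact forall_congr' fun S => by rw [h S]
  rw [orb, orb, this]

theorem orb_le_orb [Finite X] {G G' : Set (Perm X)} (h : ∀ S, Inv G S → Inv G' S) :
    orb G ≤ orb G' := by
  refine (Nat.pow_le_pow_iff_right (a := 2) (by norm_num)).1 ?_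
  rw [← card_inv, ← card_inv]
  exact Nat.card_le_card_of_injective (fun S => ⟨S.1, h S.1 S.2⟩) fun S T hST => by
    simpa [Subtype.ext_iff] using hST

/-- Identifying two points in different orbits decreases the number of orbits by one. -/
theorem orb_eq_orb_add_one [Finite X] {G G' : Set (Perm X)} {x y : X}
    (h : ∀ S, Inv G' S ↔ Inv G S ∧ (x ∈ S ↔ y ∈ S)) {T : Set X} (hT : Inv G T)
    (hx : x ∈ T) (hy : y ∉ T) : orb G = orb G' + 1 := by
  refine Nat.pow_right_injective le_rfl ?_
  simp only [pow_succ, ← card_inv]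
  have hcard : Nat.card ({S // Inv G' S} × Bool) = Nat.card {S // Inv G S} := by
    refine Nat.card_congr (Equiv.ofBijective (fun p : {S // Inv G' S} × Bool =>
      (⟨if p.2 then symmDiff p.1.1 T else p.1.1, by
        have := ((h _).1 p.1.2).1
        split_ifs
        · exact this.symmDiff hT
        · exact this⟩ : {S // Inv G S})) ⟨?_, ?_⟩)
    · rintro ⟨⟨S, hS⟩, b⟩ ⟨⟨S', hS'⟩, b'⟩ heq
      have h1 := ((h _).1 hS).2
      have h2 := ((h _).1 hS').2
      cases b <;> cases b' <;> simp only [Subtype.mk.injEq, if_true, if_false, Bool.false_eq_true,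
        Prod.mk.injEq, and_true, and_false, reduceCtorEq] at heq ⊢
      · exact heq
      · subst heq
        simp [Set.mem_symmDiff, hx, hy] at h1
        tauto
      · subst heq
        simp [Set.mem_symmDiff, hx, hy] at h2
        tauto
      · exact symmDiff_left_injective T heq
    · rintro ⟨S, hS⟩
      by_cases hxy : x ∈ S ↔ y ∈ S
      · exact ⟨(⟨S, (h S).2 ⟨hS, hxy⟩⟩, false), by simp⟩
      · refine ⟨(⟨symmDiff S T, (h _).2 ⟨hS.symmDiff hT, ?_⟩⟩, true), ?_⟩
        · simp only [Set.mem_symmDiff, hx, hy]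
          tauto
        · simp [symmDiff_symmDiff_cancel_right]
  rw [← hcard, Nat.card_prod]
  simp

theorem inv_setOf_sameCycle (f : Perm X) (x : X) : Inv {f} {y | SameCycle f x y} := by
  rw [inv_singleton]
  exact fun y => sameCycle_apply_right

theorem Inv.mem_of_sameCycle {f : Perm X} {S : Set X} (hS : Inv {f} S) {x y : X}
    (h : SameCycle f x y) : x ∈ S ↔ y ∈ S := by
  obtain ⟨i, rfl⟩ := h
  have hf : ∀ x, f x ∈ S ↔ x ∈ S := inv_singleton.1 hS
  induction i using Int.induction_on with
  | zero => simp
  | succ i ih => exact ih.trans (by rw [add_comm, zpow_add, zpow_one, Perm.mul_apply, hf])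
  | pred i ih =>
    refine ih.trans ?_
    rw [← hf ((f ^ (-(i : ℤ) - 1)) x), ← Perm.mul_apply, ← zpow_one_add]
    simp

theorem orbitSetoid_singleton (f : Perm X) : orbitSetoid {f} = SameCycle.setoid f := by
  ext x y
  constructor
  · intro h
    exact (h _ (inv_setOf_sameCycle f x)).1 (SameCycle.refl f x)
  · intro h S hS
    exact hS.mem_of_sameCycle h

/-- If `x` and `y` lie in different cycles of `f`, the cycles of `f * swap x y` are those of `f`
with the cycles of `x` and `y` merged. -/
theorem inv_mul_swap_iff [Finite X] [DecidableEq X] {f : Perm X} {x y : X}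
    (hxy : ¬ SameCycle f x y) (S : Set X) :
    Inv {f * swap x y} S ↔ Inv {f} S ∧ (x ∈ S ↔ y ∈ S) := by
  constructor
  · intro h
    have key : ∀ x y : X, ¬ SameCycle f x y → Inv {f * swap x y} S → x ∈ S → y ∈ S := by
      intro x y hxy h hx
      by_contra hy
      rw [inv_singleton] at h
      have hT : Inv {f} (S ∩ {z | SameCycle f y z}) := by
        refine inv_singleton_of_forall_mem ?_
        rintro z ⟨hz, hyz⟩
        refine ⟨?_, sameCycle_apply_right.2 hyz⟩
        have hzx : z ≠ x := by
          rintro rfl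
          exact hxy (SameCycle.symm hyz)
        have hzy : z ≠ y := by
          rintro rfl
          exact hy hz
        have := (h z).2 hz
        rwa [Perm.mul_apply, swap_apply_of_ne_of_ne hzx hzy] at this
      have hfy : f y ∈ S ∩ {z | SameCycle f y z} := by
        refine ⟨?_, sameCycle_apply_right.2 (SameCycle.refl f y)⟩
        simpa using (h x).2 hx
      exact hy ((inv_singleton.1 hT y).1 hfy).1
    have hiff : x ∈ S ↔ y ∈ S :=
      ⟨key x y hxy h, key y x (fun h' => hxy h'.symm) (by rwa [swap_comm])⟩
    refine ⟨?_, hiff⟩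
    have := h.mul (inv_swap.2 hiff)
    rwa [mul_assoc, swap_mul_self, mul_one] at this
  · rintro ⟨h, hiff⟩
    exact h.mul (inv_swap.2 hiff)

theorem orb_mul_swap_add_one [Finite X] [DecidableEq X] {f : Perm X} {x y : X}
    (hxy : ¬ SameCycle f x y) : orb {f * swap x y} + 1 = orb {f} :=
  (orb_eq_orb_add_one (inv_mul_swap_iff hxy) (inv_setOf_sameCycle f x) (SameCycle.refl f x)
    hxy).symm

theorem orb_mul_swap_le [Finite X] [DecidableEq X] (f : Perm X) (x y : X) :
    orb {f * swap x y} ≤ orb {f} + 1 := by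
  by_cases h : SameCycle (f * swap x y) x y
  · refine (orb_le_orb fun S hS => ?_).trans (Nat.le_succ _)
    have := hS.mul (inv_swap.2 (hS.mem_of_sameCycle h))
    rwa [mul_assoc, swap_mul_self, mul_one] at this
  · have := orb_mul_swap_add_one h
    rw [mul_assoc, swap_mul_self, mul_one] at this
    omega

/-- The generalized Euler inequality: the genus is nonnegative. -/
theorem orb_add_orb_mul_le [Finite X] (σ β : Perm X) (hβ : ∀ x, β (β x) = x) :
    2 * (orb {σ} + orb {σ * β}) ≤ {x | β x ≠ x}.ncard + 4 * orb {σ, β} := by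
  classical
  induction hn : {x | β x ≠ x}.ncard using Nat.strong_induction_on generalizing β with
  | _ n ih =>
    by_cases h1 : ∀ x, β x = x
    · have : β = 1 := Perm.ext h1
      subst this
      have : orb {σ, (1 : Perm X)} = orb {σ} := orb_congr fun S => by
        rw [inv_pair]
        exact and_iff_left (inv_singleton.2 fun x => Iff.rfl)
      rw [this, mul_one]
      omega
    push Not at h1
    obtain ⟨x, hx⟩ := h1
    obtain ⟨y, hy⟩ : ∃ y, y = β x := ⟨_, rfl⟩
    rw [← hy] at hx
    obtain ⟨β', hβ'⟩ : ∃ β', β' = β * swap x y := ⟨_, rfl⟩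
    have hβ'x : β' x = x := by simp [hβ', hy, hβ]
    have hβ'y : β' y = y := by simp [hβ', hy]
    have hβ'z : ∀ z, z ≠ x → z ≠ y → β' z = β z := fun z h h' => by
      simp [hβ', swap_apply_of_ne_of_ne h h']
    have hβy : β y = x := by rw [hy, hβ]
    have hββ' : β = β' * swap x y := by rw [hβ', mul_assoc, swap_mul_self, mul_one]
    have hinv' : ∀ z, β' (β' z) = z := by
      intro z
      by_cases hzx : z = x
      · rw [hzx, hβ'x, hβ'x]
      by_cases hzy : z = y
      · rw [hzy, hβ'y, hβ'y]
      rw [hβ'z z hzx hzy, hβ'z, hβ]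
      · intro h
        exact hzy (by rw [← hβ z, h, hy])
      · intro h
        exact hzx (β.injective (by rw [h, hy]))
    have hset : {z | β z ≠ z} = insert x (insert y {z | β' z ≠ z}) := by
      ext z
      simp only [Set.mem_ofPred_eq, Set.mem_insert_iff]
      by_cases hzx : z = x
      · simp only [hzx, true_or, iff_true]
        rwa [← hy]
      by_cases hzy : z = y
      · simp only [hzy, true_or, or_true, iff_true, hβy]
        exact hx.symm
      rw [hβ'z z hzx hzy]
      simp [hzx, hzy]
    have hcard : n = {z | β' z ≠ z}.ncard + 2 := by
      rw [← hn, hset, Set.ncard_insert_of_notMem, Set.ncard_insert_of_notMem]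
      · simp [hβ'y]
      · simp [hβ'x, hx.symm]
    have hih := ih _ (by omega) β' hinv' rfl
    have hσβ : σ * β = σ * β' * swap x y := by rw [mul_assoc, ← hββ']
    have hpair : ∀ S, Inv {σ, β} S ↔ Inv {σ, β'} S ∧ (x ∈ S ↔ y ∈ S) := by
      intro S
      rw [inv_pair, inv_pair, and_assoc]
      refine and_congr_right fun _ => ⟨fun h => ?_, fun h => ?_⟩
      · have hxy : x ∈ S ↔ y ∈ S := by rw [hy, inv_singleton.1 h x]
        exact ⟨hβ' ▸ h.mul (inv_swap.2 hxy), hxy⟩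
      · rw [hββ']
        exact h.1.mul (inv_swap.2 h.2)
    by_cases hsep : ∃ T, Inv {σ, β'} T ∧ x ∈ T ∧ y ∉ T
    · obtain ⟨T, hT, hxT, hyT⟩ := hsep
      have e1 := orb_eq_orb_add_one hpair hT hxT hyT
      have hT' : Inv {σ * β'} T := (inv_pair.1 hT).1.mul (inv_pair.1 hT).2
      have e2 := orb_mul_swap_add_one (f := σ * β') (x := x) (y := y)
        fun h => hyT ((hT'.mem_of_sameCycle h).1 hxT)
      rw [hσβ]
      omega
    · have e1 : orb {σ, β} = orb {σ, β'} := orb_congr fun S => by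
        rw [hpair, and_iff_left_iff_imp]
        intro hS
        by_contra hne
        by_cases hxS : x ∈ S
        · exact hsep ⟨S, hS, hxS, by tauto⟩
        · exact hsep ⟨Sᶜ, hS.compl, hxS, by simp; tauto⟩
      have e2 := orb_mul_swap_le (σ * β') x y
      rw [hσβ]
      omega

end Orbits

section Period

open Function

variable {X Y : Type*}

theorem minimalPeriod_eq_succ {f : X → X} {x : X} {k : ℕ} (h : f^[k + 1] x = x)
    (h' : ∀ j < k, f^[j + 1] x ≠ x) : minimalPeriod f x = k + 1 := by
  have hper : IsPeriodicPt f (k + 1) x := h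
  refine le_antisymm (hper.minimalPeriod_le k.succ_pos) ?_
  have hpos := hper.minimalPeriod_pos k.succ_pos
  by_contra! hlt
  refine h' (minimalPeriod f x - 1) (by omega) ?_
  rw [Nat.sub_add_cancel hpos, iterate_minimalPeriod]

theorem minimalPeriod_pos [Finite X] (f : Perm X) (x : X) : 0 < minimalPeriod f x :=
  minimalPeriod_pos_of_mem_periodicPts (f.injective.mem_periodicPts x)

theorem iterate_succ_ne {f : X → X} {x : X} {j : ℕ} (hj : j + 1 < minimalPeriod f x) :
    f^[j + 1] x ≠ x :=
  not_isPeriodicPt_of_pos_of_lt_minimalPeriod j.succ_ne_zero hj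

theorem sameCycle_iterate (f : Perm X) (x : X) (n : ℕ) : SameCycle f x (f^[n] x) :=
  ⟨n, by rw [zpow_natCast, ← Perm.iterate_eq_pow]⟩

theorem exists_iterate_eq_of_sameCycle [Finite X] {f : Perm X} {x y : X}
    (h : SameCycle f x y) : ∃ i < minimalPeriod f x, f^[i] x = y := by
  obtain ⟨n, hn⟩ := h.exists_nat_pow_eq
  refine ⟨n % minimalPeriod f x, Nat.mod_lt _ (minimalPeriod_pos f x), ?_⟩
  rw [iterate_mod_minimalPeriod_eq, Perm.iterate_eq_pow, hn]

/-- Merging two cycles adds their lengths. -/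
theorem minimalPeriod_mul_swap [Finite X] [DecidableEq X] {f : Perm X} {x y : X}
    (hxy : ¬ SameCycle f x y) :
    minimalPeriod (f * swap x y) x = minimalPeriod f x + minimalPeriod f y := by
  obtain ⟨a, ha⟩ := Nat.exists_eq_add_one.2 (minimalPeriod_pos f x)
  obtain ⟨b, hb⟩ := Nat.exists_eq_add_one.2 (minimalPeriod_pos f y)
  have hx : ∀ n, f^[n] y ≠ x := fun n h => hxy (by
    have := sameCycle_iterate f y n
    rw [h] at this
    exact this.symm)
  have hy : ∀ n, f^[n] x ≠ y := fun n h => hxy (by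
    have := sameCycle_iterate f x n
    rwa [h] at this)
  have h1 : ∀ j ≤ b, (f * swap x y)^[j + 1] x = f^[j + 1] y := by
    intro j hj
    induction j with
    | zero => simp
    | succ j ih =>
      rw [iterate_succ_apply', ih (by omega), Perm.mul_apply,
        swap_apply_of_ne_of_ne (hx _) (iterate_succ_ne (by omega)), ← iterate_succ_apply' f]
  have hb' : f^[b + 1] y = y := by rw [← hb, iterate_minimalPeriod]
  have ha' : f^[a + 1] x = x := by rw [← ha, iterate_minimalPeriod]
  have h2 : ∀ j ≤ a, (f * swap x y)^[b + 1 + j + 1] x = f^[j + 1] x := by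
    intro j hj
    induction j with
    | zero => rw [add_zero, iterate_succ_apply', h1 b le_rfl, hb']; simp
    | succ j ih =>
      rw [iterate_succ_apply', ← add_assoc, ih (by omega), Perm.mul_apply,
        swap_apply_of_ne_of_ne (iterate_succ_ne (by omega)) (hy _), ← iterate_succ_apply' f]
  rw [ha, hb, minimalPeriod_eq_succ (k := b + 1 + a)]
  · omega
  · rw [h2 a le_rfl, ha']
  · intro j hj
    by_cases hjb : j ≤ b
    · rw [h1 j hjb]
      exact hx _
    · obtain ⟨i, rfl⟩ := Nat.exists_eq_add_of_lt (not_le.1 hjb)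
      rw [show b + i + 1 = b + 1 + i by ring, h2 i (by omega)]
      exact iterate_succ_ne (by omega)

theorem minimalPeriod_of_injective {f : X → X} {g : Y → Y} {i : X → Y} (hi : Injective i)
    (h : Semiconj i f g) (x : X) : minimalPeriod g (i x) = minimalPeriod f x := by
  rw [minimalPeriod_eq_minimalPeriod_iff]
  intro n
  rw [IsPeriodicPt, IsFixedPt, ← (h.iterate_right n).eq, hi.eq_iff]
  rfl

end Period

section Insert

open Function

variable {D : Type*} [DecidableEq D]

/-- Insert the new point `none` into the cycle of `s`, just before `s`. -/
def ins (s : D) (f : Perm D) : Perm (Option D) :=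
  swap none (some s) * optionCongr f

theorem ins_none (s : D) (f : Perm D) : ins s f none = some s := by
  simp [ins]

theorem ins_some_of_ne {s : D} {f : Perm D} {x : D} (h : f x ≠ s) :
    ins s f (some x) = some (f x) := by
  simp [ins, swap_apply_of_ne_of_ne, h]

theorem ins_some_of_eq {s : D} {f : Perm D} {x : D} (h : f x = s) :
    ins s f (some x) = none := by
  simp [ins, h]

omit [DecidableEq D] in
theorem optionCongr_mul (f g : Perm D) : optionCongr f * optionCongr g = optionCongr (f * g) := by
  ext1 x
  cases x <;> simp

theorem ins_mul_optionCongr (s : D) (f g : Perm D) :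
    ins s f * optionCongr g = ins s (f * g) := by
  rw [ins, ins, mul_assoc, optionCongr_mul]

theorem ins_injective {s t : D} {f g : Perm D} (h : ins s f = ins t g) : s = t ∧ f = g := by
  have hst : s = t := by
    have := congrArg (· none) h
    simpa [ins_none] using this
  subst hst
  exact ⟨rfl, optionCongr_injective (mul_left_cancel h)⟩

theorem exists_eq_ins (f : Perm (Option D)) (h : f none ≠ none) : ∃ s g, f = ins s g := by
  obtain ⟨s, hs⟩ := Option.ne_none_iff_exists'.1 h
  refine ⟨s, removeNone f, ?_⟩
  have := decomposeOption.symm_apply_apply f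
  rw [← this]
  simp [ins, hs]

theorem exists_eq_optionCongr (f : Perm (Option D)) (h : f none = none) :
    ∃ g, f = optionCongr g := by
  refine ⟨removeNone f, ?_⟩
  have := decomposeOption.symm_apply_apply f
  rw [← this]
  simp [h, Perm.one_def]

omit [DecidableEq D] in
theorem inv_optionCongr {f : Perm D} {S : Set (Option D)} :
    Inv {optionCongr f} S ↔ Inv {f} (some ⁻¹' S) := by
  simp [inv_singleton, Option.forall]

theorem inv_ins {s : D} {f : Perm D} {S : Set (Option D)} :
    Inv {ins s f} S ↔ Inv {f} (some ⁻¹' S) ∧ (none ∈ S ↔ some s ∈ S) := by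
  have key : (none ∈ S ↔ some s ∈ S) → (Inv {ins s f} S ↔ Inv {f} (some ⁻¹' S)) := by
    intro h
    simp only [inv_singleton, Option.forall, ins_none, h, true_and, Set.mem_preimage]
    refine forall_congr' fun x => ?_
    by_cases hx : f x = s
    · rw [ins_some_of_eq hx, h, hx]
    · rw [ins_some_of_ne hx]
  constructor
  · intro h
    have h' : none ∈ S ↔ some s ∈ S := by
      rw [← inv_singleton.1 h none, ins_none]
    exact ⟨(key h').1 h, h'⟩
  · rintro ⟨h, h'⟩
    exact (key h').2 h

omit [DecidableEq D] in
theorem orb_option [Finite D] {s : D} {G : Set (Perm (Option D))} {G' : Set (Perm D)}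
    (h : ∀ S, Inv G S ↔ Inv G' (some ⁻¹' S) ∧ (none ∈ S ↔ some s ∈ S)) : orb G = orb G' :=
  orb_eq_of_equiv
    { toFun := fun S => ⟨some ⁻¹' S.1, ((h _).1 S.2).1⟩
      invFun := fun T => ⟨{x | x.getD s ∈ T.1}, (h _).2 ⟨T.2, Iff.rfl⟩⟩
      left_inv := fun S => by
        ext x
        cases x
        · exact ((h _).1 S.2).2.symm
        · exact Iff.rfl
      right_inv := fun T => rfl }

theorem orb_ins [Finite D] (s : D) (f : Perm D) : orb {ins s f} = orb {f} :=
  orb_option fun _ => inv_ins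

theorem orb_ins_pair [Finite D] (s : D) (f g : Perm D) :
    orb {ins s f, optionCongr g} = orb {f, g} :=
  orb_option fun S => by
    rw [inv_pair, inv_ins, inv_optionCongr, inv_pair]
    tauto

theorem minimalPeriod_ins_none [Finite D] (s : D) (f : Perm D) :
    minimalPeriod (ins s f) none = minimalPeriod f s + 1 := by
  obtain ⟨a, ha⟩ := Nat.exists_eq_add_one.2 (minimalPeriod_pos f s)
  have h1 : ∀ j ≤ a, (ins s f)^[j + 1] none = some (f^[j] s) := by
    intro j hj
    induction j with
    | zero => simp [ins_none]
    | succ j ih =>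
      have hne : f (f^[j] s) ≠ s := by
        rw [← iterate_succ_apply' f]
        exact iterate_succ_ne (by omega)
      rw [iterate_succ_apply', ih (by omega), ins_some_of_ne hne, ← iterate_succ_apply' f]
  rw [ha, minimalPeriod_eq_succ]
  · rw [iterate_succ_apply', h1 a le_rfl, ins_some_of_eq]
    rw [← iterate_succ_apply' f, Nat.succ_eq_add_one, ← ha, iterate_minimalPeriod]
  · intro j hj
    rw [h1 j (by omega)]
    simp

variable {t e : D} {f : Perm D} {i : ℕ}

theorem ins_mul_swap_iterate (hi : i < minimalPeriod f t) (he : f^[i] t = e) {j : ℕ}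
    (hj : j ≤ i) : (ins t f * swap none (some e))^[j + 1] (some e) = some (f^[j] t) := by
  induction j with
  | zero => simp [ins_none]
  | succ j ih =>
    have hne : f (f^[j] t) ≠ t := by
      rw [← iterate_succ_apply' f]
      exact iterate_succ_ne (by omega)
    have hne' : f^[j] t ≠ e := by
      rw [← he, Ne, iterate_eq_iterate_iff_of_lt_minimalPeriod (by omega) hi]
      omega
    rw [iterate_succ_apply', ih (by omega), Perm.mul_apply,
      swap_apply_of_ne_of_ne (by simp) (by simpa using hne'), ins_some_of_ne hne,
      ← iterate_succ_apply' f]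

theorem minimalPeriod_ins_mul_swap (hi : i < minimalPeriod f t) (he : f^[i] t = e) :
    minimalPeriod (ins t f * swap none (some e)) (some e) = i + 1 := by
  rw [minimalPeriod_eq_succ]
  · rw [ins_mul_swap_iterate hi he le_rfl, he]
  · intro j hj
    rw [ins_mul_swap_iterate hi he hj.le, ← he, Ne, Option.some_inj,
      iterate_eq_iterate_iff_of_lt_minimalPeriod (by omega) hi]
    omega

theorem not_sameCycle_ins_mul_swap [Finite D] (hi : i < minimalPeriod f t) (he : f^[i] t = e) :
    ¬ SameCycle (ins t f * swap none (some e)) none (some e) := by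
  intro h
  have hS : Inv {ins t f * swap none (some e)} {x | ∃ j ≤ i, x = some (f^[j] t)} := by
    refine inv_singleton_of_forall_mem ?_
    rintro x ⟨j, hj, rfl⟩
    rw [← ins_mul_swap_iterate hi he hj,
      ← iterate_succ_apply' (ins t f * swap none (some e))]
    rcases hj.eq_or_lt with rfl | hlt
    · refine ⟨0, by omega, ?_⟩
      rw [iterate_succ_apply', ins_mul_swap_iterate hi he le_rfl, he]
      simp [ins_none]
    · exact ⟨j + 1, hlt, ins_mul_swap_iterate hi he hlt⟩
  have := (hS.mem_of_sameCycle h).2 ⟨i, le_rfl, by rw [he]⟩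
  simp at this

theorem orb_ins_mul_swap [Finite D] (h : SameCycle f t e) :
    orb {ins t f * swap none (some e)} = orb {f} + 1 := by
  obtain ⟨i, hi, he⟩ := exists_iterate_eq_of_sameCycle h
  rw [← orb_ins t, ← orb_mul_swap_add_one (not_sameCycle_ins_mul_swap hi he), mul_assoc,
    swap_mul_self, mul_one]

theorem sameCycle_ins [Finite D] (h : SameCycle (ins t f) none (some e)) : SameCycle f t e := by
  have hS : Inv {ins t f} {x | SameCycle f t (x.getD t)} :=
    inv_ins.2 ⟨inv_setOf_sameCycle f t, Iff.rfl⟩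
  exact (hS.mem_of_sameCycle h).1 (SameCycle.refl f t)

end Insert

section Finsum

variable {α : Type*} {M : Type*} [AddCommMonoid M]

theorem finsum_sigma {ι : Type*} {β : ι → Type*} [Finite ι] [∀ i, Finite (β i)]
    (f : (Σ i, β i) → M) : ∑ᶠ x, f x = ∑ᶠ i, ∑ᶠ b, f ⟨i, b⟩ := by
  have := Fintype.ofFinite ι
  have := fun i => Fintype.ofFinite (β i)
  simp only [finsum_eq_sum_of_fintype, Fintype.sum_sigma]

/-- Decompose a finite sum according to the unique `i` related to each term. -/
theorem finsum_subtype_fiberwise [Finite α] {ι : Type*} [Finite ι] {P : α → Prop}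
    {Q : ι → α → Prop} (h : ∀ a, P a → ∃! i, Q i a) (f : α → M) :
    ∑ᶠ a : {a // P a}, f a = ∑ᶠ i, ∑ᶠ a : {a // P a ∧ Q i a}, f a := by
  rw [← finsum_sigma (fun x : Σ i, {a // P a ∧ Q i a} => f x.2)]
  refine (finsum_eq_of_bijective
    (fun x : Σ i, {a // P a ∧ Q i a} => (⟨x.2, x.2.2.1⟩ : {a // P a})) ⟨?_, ?_⟩
    fun _ => rfl).symm
  · rintro ⟨i, a, ha, hi⟩ ⟨j, b, hb, hj⟩ hab
    obtain rfl : a = b := congrArg Subtype.val hab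
    obtain rfl := (h a ha).unique hi hj
    rfl
  · rintro ⟨a, ha⟩
    obtain ⟨i, hi, -⟩ := h a ha
    exact ⟨⟨i, a, ha, hi⟩, rfl⟩

theorem finsum_subtype_congr {P Q : α → Prop} (h : ∀ a, P a ↔ Q a) (f : α → M) :
    ∑ᶠ a : {a // P a}, f a = ∑ᶠ a : {a // Q a}, f a := by
  obtain rfl : P = Q := funext fun a => propext (h a)
  rfl

theorem finsum_subtype_eq_add [Finite α] {P Q : α → Prop} (f : α → M) :
    ∑ᶠ a : {a // P a}, f a =
      ∑ᶠ a : {a // P a ∧ Q a}, f a + ∑ᶠ a : {a // P a ∧ ¬ Q a}, f a := by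
  classical
  rw [finsum_subtype_fiberwise (Q := fun (b : Bool) a => b = true ↔ Q a)]
  · rw [finsum_eq_sum_of_fintype, Fintype.sum_bool]
    congr 1 <;> exact finsum_subtype_congr (by simp) f
  · intro a _
    refine ⟨decide (Q a), by simp, fun b hb => ?_⟩
    cases b <;> simp_all

end Finsum

open Polynomial Function

variable {X Y D : Type*}

theorem mem_of_orb_eq_one {G : Set (Perm X)} (h : orb G = 1) {S : Set X} (hS : Inv G S)
    {x : X} (hx : x ∈ S) (y : X) : y ∈ S := by
  have := (Nat.card_eq_one_iff_unique.1 h).1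
  exact (Quotient.exact (Subsingleton.elim (Quotient.mk (orbitSetoid G) x) (Quotient.mk _ y))
    S hS).1 hx

theorem orb_eq_one [Nonempty X] {G : Set (Perm X)}
    (h : ∀ S, Inv G S → ∀ x ∈ S, ∀ y, y ∈ S) : orb G = 1 := by
  refine Nat.card_eq_one_iff_unique.2 ⟨⟨fun a b => ?_⟩,
    ‹Nonempty X›.map (Quotient.mk _)⟩
  induction a, b using Quotient.inductionOn₂ with
  | _ x y => exact Quotient.sound fun S hS => ⟨fun hx => h S hS x hx y, fun hy => h S hS y hy x⟩

/-- The pair `(σ, β)` encodes a labelled planar map, where the involution `β` pairs the darts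
into edges, with one marked corner, encoded by the only fixed point `r` of `β`. -/
structure Planted (r : X) (p : Perm X × Perm X) : Prop where
  invol : ∀ x, p.2 (p.2 x) = x
  fix : ∀ x, p.2 x = x ↔ x = r
  conn : orb {p.1, p.2} = 1
  euler : 2 * (orb {p.1} + orb {p.1 * p.2}) = Nat.card X + 3

/-- The pair `(σ, α)` encodes a labelled planar map with at least one edge. -/
structure IsMap (p : Perm X × Perm X) : Prop where
  invol : ∀ x, p.2 (p.2 x) = x
  fpf : ∀ x, p.2 x ≠ x
  conn : orb {p.1, p.2} = 1
  euler : 2 * (orb {p.1} + orb {p.1 * p.2}) = Nat.card X + 4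

/-- The weight of a labelled map is `(1 + X) ^ d`, where `d` is the degree of the face at `x`. -/
noncomputable def weight (x : X) (p : Perm X × Perm X) : ℤ[X] :=
  (1 + Polynomial.X) ^ minimalPeriod (p.1 * p.2) x

noncomputable def plantedSum (r : X) : ℤ[X] := ∑ᶠ p : {p // Planted r p}, weight r p

noncomputable def mapSum (s : X) : ℤ[X] :=
  ∑ᶠ p : {p : Perm X × Perm X // IsMap p}, weight s p

/-- The sum of the weights of the maps containing the edge `s s'` in which this edge is not
an isthmus. -/
noncomputable def nonIsthmusSum [DecidableEq X] (s s' : X) : ℤ[X] :=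
  ∑ᶠ p : {p : Perm X × Perm X // (IsMap p ∧ p.2 s = s') ∧ orb {p.1, p.2 * swap s s'} = 1},
    weight s p

section Transport

variable (e : X ≃ Y)

theorem inv_permCongr {f : Perm X} {S : Set Y} :
    Inv {e.permCongr f} S ↔ Inv {f} (e ⁻¹' S) := by
  simp [inv_singleton, e.symm.forall_congr_left]

variable [Finite X] [Finite Y]

theorem orb_of_preimage {G : Set (Perm X)} {G' : Set (Perm Y)}
    (h : ∀ S, Inv G' S ↔ Inv G (e ⁻¹' S)) : orb G' = orb G :=
  orb_eq_of_equiv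
    { toFun := fun S => ⟨e ⁻¹' S.1, (h _).1 S.2⟩
      invFun := fun T => ⟨e.symm ⁻¹' T.1, (h _).2 (by
        convert T.2
        simp [← Set.preimage_comp])⟩
      left_inv := fun S => by simp [← Set.preimage_comp]
      right_inv := fun T => by simp [← Set.preimage_comp] }

theorem orb_permCongr (f : Perm X) : orb {e.permCongr f} = orb {f} :=
  orb_of_preimage e fun _ => inv_permCongr e

theorem orb_permCongr_pair (f g : Perm X) :
    orb {e.permCongr f, e.permCongr g} = orb {f, g} :=
  orb_of_preimage e fun S => by rw [inv_pair, inv_pair, inv_permCongr, inv_permCongr]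

theorem planted_permCongr {r : X} {p : Perm X × Perm X} :
    Planted (e r) (e.permCongr p.1, e.permCongr p.2) ↔ Planted r p := by
  have h1 : (∀ x, e.permCongr p.2 (e.permCongr p.2 x) = x) ↔ ∀ x, p.2 (p.2 x) = x := by
    simp [e.symm.forall_congr_left]
  have h2 : (∀ x, e.permCongr p.2 x = x ↔ x = e r) ↔ ∀ x, p.2 x = x ↔ x = r := by
    simp [e.symm.forall_congr_left]
  have h3 := orb_permCongr_pair e p.1 p.2
  have h4 : 2 * (orb {e.permCongr p.1} + orb {e.permCongr p.1 * e.permCongr p.2}) =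
      Nat.card Y + 3 ↔ 2 * (orb {p.1} + orb {p.1 * p.2}) = Nat.card X + 3 := by
    rw [← permCongr_mul, orb_permCongr, orb_permCongr, Nat.card_congr e]
  exact ⟨fun h => ⟨h1.1 h.1, h2.1 h.2, h3 ▸ h.3, h4.1 h.4⟩,
    fun h => ⟨h1.2 h.1, h2.2 h.2, h3 ▸ h.3, h4.2 h.4⟩⟩

theorem isMap_permCongr {p : Perm X × Perm X} :
    IsMap (e.permCongr p.1, e.permCongr p.2) ↔ IsMap p := by
  have h1 : (∀ x, e.permCongr p.2 (e.permCongr p.2 x) = x) ↔ ∀ x, p.2 (p.2 x) = x := by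
    simp [e.symm.forall_congr_left]
  have h2 : (∀ x, e.permCongr p.2 x ≠ x) ↔ ∀ x, p.2 x ≠ x := by
    simp [e.symm.forall_congr_left]
  have h3 := orb_permCongr_pair e p.1 p.2
  have h4 : 2 * (orb {e.permCongr p.1} + orb {e.permCongr p.1 * e.permCongr p.2}) =
      Nat.card Y + 4 ↔ 2 * (orb {p.1} + orb {p.1 * p.2}) = Nat.card X + 4 := by
    rw [← permCongr_mul, orb_permCongr, orb_permCongr, Nat.card_congr e]
  exact ⟨fun h => ⟨h1.1 h.1, h2.1 h.2, h3 ▸ h.3, h4.1 h.4⟩,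
    fun h => ⟨h1.2 h.1, h2.2 h.2, h3 ▸ h.3, h4.2 h.4⟩⟩

omit [Finite X] [Finite Y] in
theorem weight_permCongr (x : X) (p : Perm X × Perm X) :
    weight (e x) (e.permCongr p.1, e.permCongr p.2) = weight x p := by
  rw [weight, weight, ← permCongr_mul,
    minimalPeriod_of_injective (f := p.1 * p.2) e.injective fun y => by simp]

theorem plantedSum_equiv (r : X) : plantedSum (e r) = plantedSum r := by
  refine (finsum_eq_of_bijective _ ((Equiv.prodCongr e.permCongr e.permCongr).subtypeEquiv
    fun p => (planted_permCongr e).symm).bijective fun p => ?_).symm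
  exact (weight_permCongr e r p).symm

theorem nonIsthmusSum_equiv [DecidableEq X] [DecidableEq Y] (s s' : X) :
    nonIsthmusSum (e s) (e s') = nonIsthmusSum s s' := by
  refine (finsum_eq_of_bijective _ ((Equiv.prodCongr e.permCongr e.permCongr).subtypeEquiv
    fun p => ?_).bijective fun p => ?_).symm
  · refine and_congr (and_congr (isMap_permCongr e).symm ?_) ?_
    · simp
    · have : e.permCongr p.2 * swap (e s) (e s') = e.permCongr (p.2 * swap s s') := by
        rw [permCongr_mul]
        congr 1
        exact (symm_trans_swap_trans s s' e).symm
      change _ ↔ orb {e.permCongr p.1, e.permCongr p.2 * swap (e s) (e s')} = 1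
      rw [this, orb_permCongr_pair]
  · exact (weight_permCongr e s p).symm

end Transport

theorem planted_ins_iff [Finite D] [DecidableEq D] {s : D} {σ α : Perm D} :
    Planted none (ins s σ, optionCongr α) ↔ IsMap (σ, α) := by
  have h1 : (∀ x, optionCongr α (optionCongr α x) = x) ↔ ∀ x, α (α x) = x := by
    simp [Option.forall]
  have h2 : (∀ x, optionCongr α x = x ↔ x = none) ↔ ∀ x, α x ≠ x := by
    simp [Option.forall]
  have h3 := orb_ins_pair s σ α
  have h4 : 2 * (orb {ins s σ} + orb {ins s σ * optionCongr α}) =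
      Nat.card (Option D) + 3 ↔ 2 * (orb {σ} + orb {σ * α}) = Nat.card D + 4 := by
    rw [ins_mul_optionCongr, orb_ins, orb_ins, Finite.card_option]
  exact ⟨fun h => ⟨h1.1 h.1, h2.1 h.2, h3 ▸ h.3, h4.1 h.4⟩,
    fun h => ⟨h1.2 h.1, h2.2 h.2, h3 ▸ h.3, h4.2 h.4⟩⟩

theorem exists_ins_of_orb_eq_one [DecidableEq D] [Nonempty D] {σ β : Perm (Option D)}
    (h : orb {σ, β} = 1) (hβ : β none = none) :
    ∃ s σ' β', σ = ins s σ' ∧ β = optionCongr β' := by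
  obtain ⟨β', rfl⟩ := exists_eq_optionCongr β hβ
  have hσ : σ none ≠ none := by
    intro hσ
    obtain ⟨σ', rfl⟩ := exists_eq_optionCongr σ hσ
    have hS : Inv {optionCongr σ', optionCongr β'} {none} := by
      rw [inv_pair, inv_optionCongr, inv_optionCongr]
      simp [inv_singleton]
    have := mem_of_orb_eq_one h hS rfl (some (Classical.arbitrary D))
    simp at this
  obtain ⟨s, σ', rfl⟩ := exists_eq_ins σ hσ
  exact ⟨s, σ', β', rfl, rfl⟩

theorem plantedSum_none [Finite D] [Nonempty D] :
    plantedSum (none : Option D) = ∑ᶠ s : D, (1 + Polynomial.X) * mapSum s := by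
  classical
  have h (s : D) : (1 + Polynomial.X) * mapSum s =
      ∑ᶠ p : {p : Perm D × Perm D // IsMap p}, (1 + Polynomial.X) * weight s p :=
    mul_finsum _ _
  simp only [h]
  rw [← finsum_sigma (fun x : Σ _ : D, {p : Perm D × Perm D // IsMap p} =>
    (1 + Polynomial.X) * weight x.1 x.2)]
  refine (finsum_eq_of_bijective (fun x : Σ _ : D, {p : Perm D × Perm D // IsMap p} =>
    (⟨(ins x.1 x.2.1.1, optionCongr x.2.1.2), planted_ins_iff.2 x.2.2⟩ :
      {p : Perm (Option D) × Perm (Option D) // Planted none p})) ⟨?_, ?_⟩ ?_).symm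
  · rintro ⟨s, ⟨σ, α⟩, h⟩ ⟨s', ⟨σ', α'⟩, h'⟩ heq
    simp only [Subtype.mk.injEq, Prod.mk.injEq] at heq
    obtain ⟨rfl, rfl⟩ := ins_injective heq.1
    obtain rfl := optionCongr_injective heq.2
    rfl
  · rintro ⟨⟨σ, β⟩, h⟩
    obtain ⟨s, σ, α, rfl, rfl⟩ := exists_ins_of_orb_eq_one h.conn ((h.fix none).2 rfl)
    exact ⟨⟨s, (σ, α), planted_ins_iff.1 h⟩, rfl⟩
  · rintro ⟨s, ⟨σ, α⟩, h⟩
    simp only [weight]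
    rw [ins_mul_optionCongr, minimalPeriod_ins_none, pow_succ']

theorem plantedSum_of_subsingleton [Subsingleton X] (r : X) :
    plantedSum r = 1 + Polynomial.X := by
  have : Finite X := Finite.of_subsingleton
  have : Nonempty X := ⟨r⟩
  have h1 : ∀ G : Set (Perm X), orb G = 1 := fun G => orb_eq_one fun S _ x hx y =>
    Subsingleton.elim x y ▸ hx
  have hP : Planted r ((1, 1) : Perm X × Perm X) :=
    ⟨fun _ => rfl, fun x => by simp [Subsingleton.elim x r], h1 _, by simp [h1]⟩
  have : Unique {p : Perm X × Perm X // Planted r p} :=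
    ⟨⟨⟨_, hP⟩⟩, fun _ => Subsingleton.elim _ _⟩
  rw [plantedSum, finsum_unique, weight, minimalPeriod_eq_one_of_subsingleton, pow_one]

section NonIsthmus

variable {D : Type*} [DecidableEq D]

theorem divX_one_add_X_pow (m : ℕ) :
    divX ((1 + Polynomial.X : ℤ[X]) ^ m) = ∑ i ∈ Finset.range m, (1 + Polynomial.X) ^ i := by
  have h := geom_sum_mul (1 + Polynomial.X : ℤ[X]) m
  rw [add_sub_cancel_left, eq_sub_iff_add_eq] at h
  rw [← h, divX_add, divX_one, add_zero]
  exact Polynomial.ext fun n => by rw [coeff_divX, coeff_mul_X]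

/-- Removing the edge `s s'` from a fixed-point-free involution. -/
theorem involution_mul_swap_iff {s s' : D} {β : Perm D} (hne : s ≠ s') :
    ((∀ x, (β * swap s s') ((β * swap s s') x) = x) ∧ (∀ x, (β * swap s s') x ≠ x) ∧
      (β * swap s s') s = s') ↔
    (∀ x, β (β x) = x) ∧ ∀ x, β x = x ↔ x = s ∨ x = s' := by
  have h1 : (β * swap s s') s = β s' := by simp
  have h2 : (β * swap s s') s' = β s := by simp
  have h3 : ∀ x, x ≠ s → x ≠ s' → (β * swap s s') x = β x := by
    intro x hx hx'
    rw [Perm.mul_apply, swap_apply_of_ne_of_ne hx hx']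
  generalize β * swap s s' = α at h1 h2 h3
  have hmem : β s = s → β s' = s' → ∀ x, x ≠ s → x ≠ s' → β x ≠ s ∧ β x ≠ s' :=
    fun hs hs' x hx hx' =>
      ⟨fun h => hx (β.injective (h.trans hs.symm)), fun h => hx' (β.injective (h.trans hs'.symm))⟩
  constructor
  · rintro ⟨hinv, hfpf, hss⟩
    have hs' : β s' = s' := by rw [← h1, hss]
    have hs : β s = s := by rw [← h2, ← hss, hinv]
    refine ⟨fun x => ?_, fun x => ⟨fun hx => ?_, ?_⟩⟩
    · by_cases hx : x = s
      · rw [hx, hs, hs]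
      by_cases hx' : x = s'
      · rw [hx', hs', hs']
      obtain ⟨hy, hy'⟩ := hmem hs hs' x hx hx'
      rw [← h3 x hx hx', ← h3 _ (by rwa [h3 x hx hx']) (by rwa [h3 x hx hx']), hinv]
    · by_contra! hxe
      exact hfpf x (by rw [h3 x hxe.1 hxe.2, hx])
    · rintro (rfl | rfl)
      · exact hs
      · exact hs'
  · rintro ⟨hinv, hfix⟩
    have hs : β s = s := (hfix s).2 (Or.inl rfl)
    have hs' : β s' = s' := (hfix s').2 (Or.inr rfl)
    refine ⟨fun x => ?_, fun x => ?_, h1.trans hs'⟩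
    · by_cases hx : x = s
      · rw [hx, h1, hs', h2, hs]
      by_cases hx' : x = s'
      · rw [hx', h2, hs, h1, hs']
      obtain ⟨hy, hy'⟩ := hmem hs hs' x hx hx'
      rw [h3 x hx hx', h3 _ hy hy', hinv]
    · by_cases hx : x = s
      · rw [hx, h1, hs']
        exact hne.symm
      by_cases hx' : x = s'
      · rw [hx', h2, hs]
        exact hne
      rw [h3 x hx hx', Ne, hfix]
      tauto

omit [DecidableEq D] in
theorem ncard_ne_add_one [Finite D] {r : D} {β : Perm D} (h : ∀ x, β x = x ↔ x = r) :
    {x | β x ≠ x}.ncard + 1 = Nat.card D := by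
  have : {x | β x ≠ x} = {r}ᶜ := by
    ext x
    simp [h]
  rw [this, ← Set.ncard_add_ncard_compl {r}, Set.ncard_singleton, add_comm]

theorem inv_pair_mul_swap {σ β : Perm D} {s s' : D} (hs : β s = s)
    {S : Set D} : Inv {σ, β * swap s s'} S ↔ Inv {σ, β} S ∧ (s ∈ S ↔ s' ∈ S) := by
  rw [inv_pair, inv_pair, and_assoc]
  refine and_congr_right fun _ => ⟨fun h => ?_, fun h => h.1.mul (inv_swap.2 h.2)⟩
  have hss : s ∈ S ↔ s' ∈ S := by
    have := inv_singleton.1 h s'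
    rwa [Perm.mul_apply, swap_apply_right, hs] at this
  have := h.mul (inv_swap.2 hss)
  rw [mul_assoc, swap_mul_self, mul_one] at this
  exact ⟨this, hss⟩

theorem optionCongr_involution_iff {e : D} {β : Perm D} :
    ((∀ x, (optionCongr β * swap (some e) none) ((optionCongr β * swap (some e) none) x) = x) ∧
      ∀ x, (optionCongr β * swap (some e) none) x ≠ x) ↔
    (∀ x, β (β x) = x) ∧ ∀ x, β x = x ↔ x = e := by
  have := involution_mul_swap_iff (s := some e) (s' := none) (β := optionCongr β) (by simp)
  simpa [Option.forall] using this

theorem isMap_ins_iff [Finite D] {t e : D} {σ β : Perm D} :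
    (IsMap (ins t σ, optionCongr β * swap (some e) none) ∧ orb {ins t σ, optionCongr β} = 1) ↔
      Planted e (σ, β) ∧ SameCycle (σ * β) t e := by
  have hmul : ins t σ * (optionCongr β * swap (some e) none) =
      ins t (σ * β) * swap none (some e) := by
    rw [← mul_assoc, ins_mul_optionCongr, swap_comm]
  have hcard : Nat.card (Option D) = Nat.card D + 1 := Finite.card_option
  constructor
  · rintro ⟨⟨hinv, hfpf, -, heuler⟩, hconn⟩
    obtain ⟨hinv, hfix⟩ := optionCongr_involution_iff.1 ⟨hinv, hfpf⟩
    rw [orb_ins_pair] at hconn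
    simp only [hmul, orb_ins] at heuler
    have hne := ncard_ne_add_one hfix
    have hle := orb_add_orb_mul_le σ β hinv
    rw [hconn] at hle
    have hcyc : SameCycle (ins t (σ * β)) none (some e) := by
      by_contra h
      have := orb_mul_swap_add_one h
      rw [orb_ins] at this
      omega
    have hcyc' := sameCycle_ins hcyc
    rw [orb_ins_mul_swap hcyc'] at heuler
    exact ⟨⟨hinv, hfix, hconn, by simp only; omega⟩, hcyc'⟩
  · rintro ⟨⟨hinv, hfix, hconn, heuler⟩, hcyc⟩
    simp only at heuler hconn
    have hconn' := hconn
    rw [← orb_ins_pair t] at hconn'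
    obtain ⟨hinv', hfpf⟩ := optionCongr_involution_iff.2 ⟨hinv, hfix⟩
    refine ⟨⟨hinv', hfpf, ?_, ?_⟩, hconn'⟩
    · refine orb_eq_one fun S hS x hx y => mem_of_orb_eq_one hconn' (S := S) ?_ hx y
      exact ((inv_pair_mul_swap (by simp [(hfix e).2 rfl])).1 hS).1
    · simp only [hmul, orb_ins, orb_ins_mul_swap hcyc]
      omega

theorem nonIsthmusSum_some_none [Finite D] (e : D) :
    nonIsthmusSum (some e) none = (1 + Polynomial.X) * divX (plantedSum e) := by
  have hterm (p : Perm D × Perm D) : (1 + Polynomial.X) * divX (weight e p) =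
      ∑ᶠ i : Fin (minimalPeriod (p.1 * p.2) e), (1 + Polynomial.X) ^ (i.1 + 1) := by
    rw [weight, divX_one_add_X_pow, finsum_eq_sum_of_fintype, Fin.sum_univ_eq_sum_range
      (fun i => (1 + Polynomial.X : ℤ[X]) ^ (i + 1)), Finset.mul_sum]
    simp only [pow_succ']
  have hdiv : divX (plantedSum e) = ∑ᶠ p : {p // Planted e p}, divX (weight e p.1) :=
    (divX_hom (R := ℤ)).map_finsum (Set.toFinite _)
  rw [hdiv, mul_finsum]
  simp only [hterm]
  rw [← finsum_sigma (fun x : Σ p : {p : Perm D × Perm D // Planted e p},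
    Fin (minimalPeriod (p.1.1 * p.1.2) e) => (1 + Polynomial.X : ℤ[X]) ^ (x.2.1 + 1))]
  have hback (f : Perm D) (i : ℕ) : f^[i] (f.symm^[i] e) = e :=
    f.right_inv.iterate i e
  have hper (f : Perm D) (i : ℕ) : minimalPeriod f (f.symm^[i] e) = minimalPeriod f e := by
    rw [← minimalPeriod_apply_iterate (f.injective.mem_periodicPts _) i, hback]
  have hswap (β : Perm D) :
      optionCongr β * swap (some e) none * swap (some e) none = optionCongr β := by
    rw [mul_assoc, swap_mul_self, mul_one]
  symm
  refine finsum_eq_of_bijective (fun x : Σ p : {p : Perm D × Perm D // Planted e p},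
    Fin (minimalPeriod (p.1.1 * p.1.2) e) =>
      (⟨(ins ((x.1.1.1 * x.1.1.2).symm^[x.2.1] e) x.1.1.1,
        optionCongr x.1.1.2 * swap (some e) none), by
        have := isMap_ins_iff.2 ⟨x.1.2, (hback (x.1.1.1 * x.1.1.2) x.2.1) ▸
          sameCycle_iterate (x.1.1.1 * x.1.1.2) ((x.1.1.1 * x.1.1.2).symm^[x.2.1] e) x.2.1⟩
        refine ⟨⟨this.1, by simp⟩, ?_⟩
        simp only [hswap]
        exact this.2⟩ :
      {p : Perm (Option D) × Perm (Option D) // (IsMap p ∧ p.2 (some e) = none) ∧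
        orb {p.1, p.2 * swap (some e) none} = 1})) ⟨?_, ?_⟩ ?_
  · rintro ⟨⟨⟨σ, β⟩, h⟩, i⟩ ⟨⟨⟨σ', β'⟩, h'⟩, i'⟩ heq
    simp only [Subtype.mk.injEq, Prod.mk.injEq] at heq
    obtain ⟨ht, rfl⟩ := ins_injective heq.1
    obtain rfl := optionCongr_injective (mul_right_cancel heq.2)
    congr 1
    ext
    have hi : ∀ j : Fin (minimalPeriod (σ * β) e),
        j.1 < minimalPeriod (σ * β) ((σ * β).symm^[i.1] e) := fun j => by
      rw [hper]
      exact j.2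
    refine (iterate_eq_iterate_iff_of_lt_minimalPeriod (hi i) (hi i')).1 ?_
    rw [hback, ht, hback]
  · rintro ⟨⟨σ, α⟩, ⟨h, hα⟩, hconn⟩
    simp only at hα hconn
    have : Nonempty D := ⟨e⟩
    have hα' : α none = some e := by rw [← hα, h.invol]
    obtain ⟨t, σ, β, rfl, hβ⟩ := exists_ins_of_orb_eq_one hconn (by simp [hα])
    obtain rfl : α = optionCongr β * swap (some e) none := by
      rw [← hβ, mul_assoc, swap_mul_self, mul_one]
    rw [hswap] at hconn
    obtain ⟨hP, hcyc⟩ := isMap_ins_iff.1 ⟨h, hconn⟩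
    obtain ⟨i, hi, he⟩ := exists_iterate_eq_of_sameCycle hcyc
    have ht : (σ * β).symm^[i] e = t := by
      rw [← he]
      exact (σ * β).left_inv.iterate i t
    refine ⟨⟨⟨(σ, β), hP⟩, ⟨i, ?_⟩⟩, ?_⟩
    · rw [← hper _ i]
      simpa only [ht] using hi
    · simp only [ht]
  · rintro ⟨⟨⟨σ, β⟩, h⟩, i⟩
    have hi : i.1 < minimalPeriod (σ * β) ((σ * β).symm^[i.1] e) := by
      rw [hper]
      exact i.2
    simp only [weight]
    rw [← mul_assoc, ins_mul_optionCongr, swap_comm,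
      minimalPeriod_ins_mul_swap hi (hback _ _)]

end NonIsthmus

section Isthmus

variable {D : Type*}

theorem finsum_mul_finsum {ι κ R : Type*} [Finite ι] [Finite κ] [CommSemiring R] (f : ι → R)
    (g : κ → R) : (∑ᶠ i, f i) * ∑ᶠ k, g k = ∑ᶠ x : ι × κ, f x.1 * g x.2 := by
  have := Fintype.ofFinite ι
  have := Fintype.ofFinite κ
  simp only [finsum_eq_sum_of_fintype, Fintype.sum_mul_sum, Fintype.sum_prod_type]

section SubtypeCongr

variable {p : D → Prop} [DecidablePred p]

theorem inv_subtypeCongr {f : Perm {x // p x}} {g : Perm {x // ¬ p x}} {S : Set D} :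
    Inv {f.subtypeCongr g} S ↔
      Inv {f} (Subtype.val ⁻¹' S) ∧ Inv {g} (Subtype.val ⁻¹' S) := by
  simp only [inv_singleton, Set.mem_preimage]
  refine ⟨fun h => ⟨fun x => ?_, fun x => ?_⟩, fun h x => ?_⟩
  · rw [← h x, Perm.subtypeCongr.left_apply_subtype]
  · rw [← h x, Perm.subtypeCongr.right_apply_subtype]
  · by_cases hx : p x
    · rw [Perm.subtypeCongr.left_apply _ _ hx, h.1]
    · rw [Perm.subtypeCongr.right_apply _ _ hx, h.2]

theorem inv_setOf_subtypeCongr (f : Perm {x // p x}) (g : Perm {x // ¬ p x}) :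
    Inv {f.subtypeCongr g} {x | p x} :=
  inv_subtypeCongr.2 ⟨inv_singleton.2 fun x => by simp [(f x).2, x.2],
    inv_singleton.2 fun x => by simp [(g x).2, x.2]⟩

omit [DecidablePred p] in
theorem orb_eq_add [Finite D] {G : Set (Perm D)} {G₁ : Set (Perm {x // p x})}
    {G₂ : Set (Perm {x // ¬ p x})}
    (h : ∀ S, Inv G S ↔ Inv G₁ (Subtype.val ⁻¹' S) ∧ Inv G₂ (Subtype.val ⁻¹' S)) :
    orb G = orb G₁ + orb G₂ := by
  refine Nat.pow_right_injective le_rfl ?_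
  simp only [pow_add, ← card_inv]
  rw [← Nat.card_prod]
  have h1 (S : Set {x // p x}) (T : Set {x // ¬ p x}) :
      Subtype.val ⁻¹' (Subtype.val '' S ∪ Subtype.val '' T) = S := by
    ext ⟨x, hx⟩
    simp [hx]
  have h2 (S : Set {x // p x}) (T : Set {x // ¬ p x}) :
      Subtype.val ⁻¹' (Subtype.val '' S ∪ Subtype.val '' T) = T := by
    ext ⟨x, hx⟩
    simp [hx]
  exact Nat.card_congr
    { toFun := fun S => (⟨Subtype.val ⁻¹' S.1, ((h _).1 S.2).1⟩,
        ⟨Subtype.val ⁻¹' S.1, ((h _).1 S.2).2⟩)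
      invFun := fun S => ⟨Subtype.val '' S.1.1 ∪ Subtype.val '' S.2.1, (h _).2 (by
        rw [h1, h2]
        exact ⟨S.1.2, S.2.2⟩)⟩
      left_inv := fun S => by
        ext x
        by_cases hx : p x <;> simp [hx]
      right_inv := fun S => by
        ext : 2
        · exact h1 _ _
        · exact h2 _ _ }

theorem orb_subtypeCongr [Finite D] (f : Perm {x // p x}) (g : Perm {x // ¬ p x}) :
    orb {f.subtypeCongr g} = orb {f} + orb {g} :=
  orb_eq_add fun _ => inv_subtypeCongr

theorem orb_subtypeCongr_pair [Finite D] (f f' : Perm {x // p x}) (g g' : Perm {x // ¬ p x}) :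
    orb {f.subtypeCongr g, f'.subtypeCongr g'} = orb {f, f'} + orb {g, g'} :=
  orb_eq_add fun S => by
    simp only [inv_pair, inv_subtypeCongr]
    tauto

theorem exists_eq_subtypeCongr {f : Perm D} (h : ∀ x, p (f x) ↔ p x) :
    ∃ (f₁ : Perm {x // p x}) (f₂ : Perm {x // ¬ p x}), f = f₁.subtypeCongr f₂ := by
  refine ⟨f.subtypePerm h, f.subtypePerm fun x => not_congr (h x), ?_⟩
  ext x
  by_cases hx : p x
  · rw [Perm.subtypeCongr.left_apply _ _ hx, Perm.subtypePerm_apply]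
  · rw [Perm.subtypeCongr.right_apply _ _ hx, Perm.subtypePerm_apply]

theorem subtypeCongr_mul (f f' : Perm {x // p x}) (g g' : Perm {x // ¬ p x}) :
    f.subtypeCongr g * f'.subtypeCongr g' = (f * f').subtypeCongr (g * g') :=
  ((Perm.subtypeCongrHom p).map_mul (f, g) (f', g')).symm

theorem subtypeCongr_inj {f f' : Perm {x // p x}} {g g' : Perm {x // ¬ p x}} :
    f.subtypeCongr g = f'.subtypeCongr g' ↔ f = f' ∧ g = g' :=
  ((Perm.subtypeCongrHom_injective p).eq_iff (a := (f, g)) (b := (f', g'))).trans Prod.mk_inj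

theorem subtypeCongr_involution_iff {s s' : D} (hs : p s) (hs' : ¬ p s')
    {f : Perm {x // p x}} {g : Perm {x // ¬ p x}} :
    ((∀ x, f.subtypeCongr g (f.subtypeCongr g x) = x) ∧
      ∀ x, f.subtypeCongr g x = x ↔ x = s ∨ x = s') ↔
    ((∀ x, f (f x) = x) ∧ ∀ x, f x = x ↔ x = ⟨s, hs⟩) ∧
      (∀ x, g (g x) = x) ∧ ∀ x, g x = x ↔ x = ⟨s', hs'⟩ := by
  have split : ∀ q : D → Prop, (∀ x, q x) ↔ (∀ x : {x // p x}, q x) ∧ ∀ x : {x // ¬ p x}, q x :=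
    fun q => ⟨fun h => ⟨fun x => h x, fun x => h x⟩, fun h x =>
      if hx : p x then h.1 ⟨x, hx⟩ else h.2 ⟨x, hx⟩⟩
  have h1 : ∀ x : {x // p x}, (x : D) ≠ s' := fun x h => hs' (h ▸ x.2)
  have h2 : ∀ x : {x // ¬ p x}, (x : D) ≠ s := fun x h => x.2 (h ▸ hs)
  rw [split, split (fun x => f.subtypeCongr g x = x ↔ x = s ∨ x = s')]
  simp only [Perm.subtypeCongr.left_apply_subtype, Perm.subtypeCongr.right_apply_subtype,
    Subtype.coe_inj, h1, h2, or_false, false_or]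
  simp only [Subtype.ext_iff]
  tauto

theorem semiconj_subtypeCongr_left (f : Perm {x // p x}) (g : Perm {x // ¬ p x}) :
    Semiconj Subtype.val f (f.subtypeCongr g) := fun x =>
  (Perm.subtypeCongr.left_apply_subtype f g x).symm

theorem semiconj_subtypeCongr_right (f : Perm {x // p x}) (g : Perm {x // ¬ p x}) :
    Semiconj Subtype.val g (f.subtypeCongr g) := fun x =>
  (Perm.subtypeCongr.right_apply_subtype f g x).symm

end SubtypeCongr

theorem orb_pos [Finite D] [Nonempty D] (G : Set (Perm D)) : 0 < orb G := by
  have : Nonempty (Quotient (orbitSetoid G)) := ‹Nonempty D›.map (Quotient.mk _)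
  exact Nat.card_pos

theorem isMap_subtypeCongr_iff [Finite D] [DecidableEq D] {p : D → Prop} [DecidablePred p]
    {s s' : D} (hs : p s) (hs' : ¬ p s') {σ β : Perm {x // p x}} {σ' β' : Perm {x // ¬ p x}} :
    (IsMap (σ.subtypeCongr σ', β.subtypeCongr β' * swap s s') ∧
        (β.subtypeCongr β' * swap s s') s = s') ↔
      Planted ⟨s, hs⟩ (σ, β) ∧ Planted ⟨s', hs'⟩ (σ', β') := by
  have hne : s ≠ s' := fun h => hs' (h ▸ hs)
  have : Nonempty {x // p x} := ⟨⟨s, hs⟩⟩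
  have : Nonempty {x // ¬ p x} := ⟨⟨s', hs'⟩⟩
  have hcard : Nat.card D = Nat.card {x // p x} + Nat.card {x // ¬ p x} := by
    rw [← Nat.card_sum, Nat.card_congr (Equiv.sumCompl p)]
  have hT := @inv_setOf_subtypeCongr D p _
  have hmul : σ.subtypeCongr σ' * (β.subtypeCongr β' * swap s s') =
      (σ * β).subtypeCongr (σ' * β') * swap s s' := by
    rw [← mul_assoc, subtypeCongr_mul]
  have hφ := orb_mul_swap_add_one (f := (σ * β).subtypeCongr (σ' * β')) (x := s) (y := s')
    fun h => hs' (((hT _ _).mem_of_sameCycle h).1 hs)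
  have hα := involution_mul_swap_iff (β := β.subtypeCongr β') hne
  rw [subtypeCongr_involution_iff hs hs'] at hα
  have hconn : β.subtypeCongr β' s = s →
      orb {σ, β} + orb {σ', β'} = orb {σ.subtypeCongr σ', β.subtypeCongr β' * swap s s'} + 1 :=
    fun h => by
      rw [← orb_subtypeCongr_pair]
      exact orb_eq_orb_add_one (fun S => inv_pair_mul_swap h)
        (inv_pair.2 ⟨hT σ σ', hT β β'⟩) hs hs'
  rw [orb_subtypeCongr] at hφ
  have hfix : (∀ x, β x = x ↔ x = ⟨s, hs⟩) → β.subtypeCongr β' s = s := fun h => by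
    rw [Perm.subtypeCongr.left_apply _ _ hs, (h _).2 rfl]
  constructor
  · rintro ⟨⟨hinv, hfpf, hc, heuler⟩, hss⟩
    obtain ⟨⟨hinv₁, hfix₁⟩, hinv₂, hfix₂⟩ := hα.1 ⟨hinv, hfpf, hss⟩
    have hc' := hconn (hfix hfix₁)
    rw [hc] at hc'
    have hp := orb_pos {σ, β}
    have hp' := orb_pos {σ', β'}
    have hc₁ : orb {σ, β} = 1 := by omega
    have hc₂ : orb {σ', β'} = 1 := by omega
    have h₁ := orb_add_orb_mul_le σ β hinv₁
    have h₂ := orb_add_orb_mul_le σ' β' hinv₂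
    have h₁' := ncard_ne_add_one hfix₁
    have h₂' := ncard_ne_add_one hfix₂
    simp only [hmul, orb_subtypeCongr] at heuler
    exact ⟨⟨hinv₁, hfix₁, hc₁, by simp only; omega⟩, ⟨hinv₂, hfix₂, hc₂, by simp only; omega⟩⟩
  · rintro ⟨⟨hinv₁, hfix₁, hc₁, he₁⟩, ⟨hinv₂, hfix₂, hc₂, he₂⟩⟩
    obtain ⟨hinv, hfpf, hss⟩ := hα.2 ⟨⟨hinv₁, hfix₁⟩, hinv₂, hfix₂⟩
    have hc' := hconn (hfix hfix₁)
    simp only at hc₁ hc₂ he₁ he₂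
    refine ⟨⟨hinv, hfpf, by simp only; omega, ?_⟩, hss⟩
    simp only [hmul, orb_subtypeCongr]
    omega

theorem IsMap.existsUnique_separating [Finite D] [DecidableEq D] {σ α : Perm D}
    (h : IsMap (σ, α)) {s s' : D} (hss : α s = s') (hc : orb {σ, α * swap s s'} ≠ 1) :
    ∃! Y : {Y : Finset D // s ∈ Y ∧ s' ∉ Y}, Inv {σ, α * swap s s'} (Y.1 : Set D) := by
  have hconn : orb {σ, α} = 1 := h.conn
  have hα : α s' = s := by rw [← hss, h.invol]
  obtain ⟨β, hβ⟩ : ∃ β, β = α * swap s s' := ⟨_, rfl⟩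
  have hβs : β s = s := by simp [hβ, hα]
  obtain rfl : α = β * swap s s' := by rw [hβ, mul_assoc, swap_mul_self, mul_one]
  rw [← hβ] at hc ⊢
  have hiff := fun S => inv_pair_mul_swap (σ := σ) (s' := s') (S := S) hβs
  obtain ⟨T, hT, hs, hs'⟩ : ∃ T, Inv {σ, β} T ∧ s ∈ T ∧ s' ∉ T := by
    by_contra! hsep
    refine hc (hconn ▸ orb_congr fun S => ?_)
    rw [hiff, iff_self_and]
    refine fun hS => ⟨hsep S hS, fun hs' => ?_⟩
    by_contra hs
    exact hsep Sᶜ hS.compl hs hs'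
  refine ⟨⟨(Set.toFinite T).toFinset, by simpa using hs, by simpa using hs'⟩, by simpa using hT,
    fun ⟨Y, hYs, hYs'⟩ hY => ?_⟩
  have hinv : Inv {σ, β * swap s s'} (symmDiff (Y : Set D) T) :=
    (hiff _).2 ⟨hY.symmDiff hT, by simp [Set.mem_symmDiff, *]⟩
  have hempty : symmDiff (Y : Set D) T = ⊥ := by
    refine Set.eq_empty_of_forall_notMem fun x hx => ?_
    have := mem_of_orb_eq_one hconn hinv hx s
    simp [Set.mem_symmDiff, *] at this
  ext x
  rw [Set.Finite.mem_toFinset, ← symmDiff_eq_bot.1 hempty, Finset.mem_coe]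

theorem isthmusSum_eq [Finite D] [DecidableEq D] (s s' : D) :
    ∑ᶠ p : {p : Perm D × Perm D // (IsMap p ∧ p.2 s = s') ∧ ¬ orb {p.1, p.2 * swap s s'} = 1},
      weight s p = ∑ᶠ Y : {Y : Finset D // s ∈ Y ∧ s' ∉ Y},
        plantedSum (⟨s, Y.2.1⟩ : {x // x ∈ Y.1}) * plantedSum (⟨s', Y.2.2⟩ : {x // x ∉ Y.1}) := by
  rw [finsum_subtype_fiberwise (Q := fun (Y : {Y : Finset D // s ∈ Y ∧ s' ∉ Y}) p =>
    Inv {p.1, p.2 * swap s s'} (Y.1 : Set D))]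
  · refine finsum_congr fun ⟨Y, hs, hs'⟩ => ?_
    simp only [plantedSum, finsum_mul_finsum]
    have hmem : ∀ x : {p : Perm {x // x ∈ Y} × Perm {x // x ∈ Y} // Planted ⟨s, hs⟩ p} ×
        {p : Perm {x // x ∉ Y} × Perm {x // x ∉ Y} // Planted ⟨s', hs'⟩ p},
        ((IsMap (x.1.1.1.subtypeCongr x.2.1.1, x.1.1.2.subtypeCongr x.2.1.2 * swap s s') ∧
          (x.1.1.2.subtypeCongr x.2.1.2 * swap s s') s = s') ∧
          ¬ orb {x.1.1.1.subtypeCongr x.2.1.1,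
            x.1.1.2.subtypeCongr x.2.1.2 * swap s s' * swap s s'} = 1) ∧
          Inv {x.1.1.1.subtypeCongr x.2.1.1,
            x.1.1.2.subtypeCongr x.2.1.2 * swap s s' * swap s s'} (Y : Set D) := by
      rintro ⟨⟨⟨σ, β⟩, h⟩, ⟨⟨σ', β'⟩, h'⟩⟩
      have hinv : Inv {σ.subtypeCongr σ', β.subtypeCongr β'} (Y : Set D) :=
        inv_pair.2 ⟨inv_setOf_subtypeCongr _ _, inv_setOf_subtypeCongr _ _⟩
      simp only [mul_assoc, swap_mul_self, mul_one]
      exact ⟨⟨(isMap_subtypeCongr_iff hs hs').2 ⟨h, h'⟩,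
        fun hc => hs' (mem_of_orb_eq_one hc hinv hs s')⟩, hinv⟩
    symm
    refine finsum_eq_of_bijective (fun x => ⟨(_, _), hmem x⟩) ⟨?_, ?_⟩ ?_
    · rintro ⟨⟨⟨σ, β⟩, h⟩, ⟨⟨σ', β'⟩, h'⟩⟩ ⟨⟨⟨τ, γ⟩, k⟩, ⟨⟨τ', γ'⟩, k'⟩⟩ heq
      simp only [Subtype.mk.injEq, Prod.mk.injEq, mul_left_inj, subtypeCongr_inj] at heq
      obtain ⟨⟨rfl, rfl⟩, rfl, rfl⟩ := heq
      rfl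
    · rintro ⟨⟨σ, α⟩, ⟨h, -⟩, hinv⟩
      obtain ⟨hσ, hβ⟩ := inv_pair.1 hinv
      obtain ⟨σ, σ', rfl⟩ := exists_eq_subtypeCongr (p := (· ∈ Y)) (inv_singleton.1 hσ)
      obtain ⟨β, β', hβ⟩ := exists_eq_subtypeCongr (p := (· ∈ Y)) (inv_singleton.1 hβ)
      obtain rfl : α = β.subtypeCongr β' * swap s s' := by
        rw [← hβ, mul_assoc, swap_mul_self, mul_one]
      obtain ⟨h, h'⟩ := (isMap_subtypeCongr_iff hs hs').1 h
      exact ⟨⟨⟨(σ, β), h⟩, ⟨(σ', β'), h'⟩⟩, rfl⟩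
    · rintro ⟨⟨⟨σ, β⟩, h⟩, ⟨⟨σ', β'⟩, h'⟩⟩
      simp only [weight]
      rw [← mul_assoc, subtypeCongr_mul, minimalPeriod_mul_swap, pow_add,
        ← minimalPeriod_of_injective Subtype.val_injective
          (semiconj_subtypeCongr_left (σ * β) (σ' * β')),
        ← minimalPeriod_of_injective Subtype.val_injective
          (semiconj_subtypeCongr_right (σ * β) (σ' * β'))]
      exact fun hc => hs' (((inv_setOf_subtypeCongr _ _).mem_of_sameCycle hc).1 hs)
  · rintro ⟨σ, α⟩ ⟨⟨h, hss⟩, hc⟩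
    exact h.existsUnique_separating hss hc

end Isthmus

section Recursion

theorem plantedSum_of_even {X : Type*} (r : X) (h : Even (Nat.card X)) : plantedSum r = 0 := by
  have : IsEmpty {p : Perm X × Perm X // Planted r p} := ⟨fun ⟨p, hp⟩ => by
    have := hp.euler
    obtain ⟨k, hk⟩ := h
    omega⟩
  rw [plantedSum, finsum_of_isEmpty]

theorem finsum_separating {D M : Type*} [DecidableEq D] [Finite D] [AddCommMonoid M] {s s' : D}
    (hne : s ≠ s') {N : ℕ} (hD : Nat.card D = N + 2) (g : ℕ → M) :
    ∑ᶠ Y : {Y : Finset D // s ∈ Y ∧ s' ∉ Y}, g Y.1.card =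
      ∑ k ∈ Finset.range (N + 1), N.choose k • g (k + 1) := by
  have := Fintype.ofFinite D
  rw [Nat.card_eq_fintype_card] at hD
  set A : Finset D := Finset.univ \ {s, s'} with hA
  have hAcard : A.card = N := by
    rw [hA, Finset.card_sdiff_of_subset (Finset.subset_univ _), Finset.card_pair hne,
      Finset.card_univ, hD, Nat.add_sub_cancel]
  have hs : ∀ Z ∈ A.powerset, s ∉ Z := fun Z hZ h => by
    simpa [hA] using Finset.mem_powerset.1 hZ h
  have hs' : ∀ Z ∈ A.powerset, s' ∉ Z := fun Z hZ h => by
    simpa [hA] using Finset.mem_powerset.1 hZ h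
  rw [← hAcard, ← Finset.sum_powerset_apply_card (fun k => g (k + 1)), ← Finset.sum_coe_sort,
    ← finsum_eq_sum_of_fintype]
  symm
  refine finsum_eq_of_bijective (fun Z : A.powerset => ⟨insert s Z.1, by simp, by
    simpa [hne.symm] using hs' _ Z.2⟩) ⟨?_, ?_⟩ fun Z => ?_
  · rintro ⟨Z, hZ⟩ ⟨Z', hZ'⟩ h
    simp only [Subtype.mk.injEq] at h ⊢
    rw [← Finset.erase_insert (hs Z hZ), h, Finset.erase_insert (hs Z' hZ')]
  · rintro ⟨Y, hY, hY'⟩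
    refine ⟨⟨Y.erase s, ?_⟩, Subtype.ext (Finset.insert_erase hY)⟩
    rw [Finset.mem_powerset]
    intro x hx
    rw [Finset.mem_erase] at hx
    simp only [hA, Finset.mem_sdiff, Finset.mem_univ, true_and, Finset.mem_insert,
      Finset.mem_singleton, not_or]
    exact ⟨hx.1, fun h => hY' (h ▸ hx.2)⟩
  · rw [Finset.card_insert_of_notMem (hs _ Z.2)]

theorem sum_range_eq_sum_even {M : Type*} [AddCommMonoid M] (f : ℕ → M)
    (hf : ∀ i, f (2 * i + 1) = 0) (n : ℕ) :
    ∑ k ∈ Finset.range (2 * n + 1), f k = ∑ i ∈ Finset.range (n + 1), f (2 * i) := by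
  induction n with
  | zero => simp
  | succ n ih =>
    rw [show 2 * (n + 1) + 1 = 2 * n + 1 + 1 + 1 by ring, Finset.sum_range_succ,
      Finset.sum_range_succ, ih, hf, add_zero, Finset.sum_range_succ _ (n + 1)]
    rfl

/-- The claim that the weighted number of planted maps with `n` edges is given by `tuttePoly`. -/
def PlantedSumEq (n : ℕ) : Prop :=
  ∀ (X : Type) [Finite X] (r : X), Nat.card X = 2 * n + 1 →
    plantedSum r = ((2 * n).factorial : ℤ[X]) * ((1 + Polynomial.X) * tuttePoly n)

variable {n : ℕ} {D : Type} [Finite D]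

theorem isthmusSum_eq_tuttePoly [DecidableEq D] (ih : ∀ m ≤ n, PlantedSumEq m)
    (hD : Nat.card D = 2 * n + 2) {s s' : D} (hne : s ≠ s') :
    ∑ᶠ Y : {Y : Finset D // s ∈ Y ∧ s' ∉ Y},
        plantedSum (⟨s, Y.2.1⟩ : {x // x ∈ Y.1}) * plantedSum (⟨s', Y.2.2⟩ : {x // x ∉ Y.1}) =
      ((2 * n).factorial : ℤ[X]) * ((1 + Polynomial.X) ^ 2 *
        ∑ p ∈ Finset.HasAntidiagonal.antidiagonal n, tuttePoly p.1 * tuttePoly p.2) := by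
  set w : ℕ → ℤ[X] := fun k => if Odd k then
    ((k - 1).factorial : ℤ[X]) * ((1 + Polynomial.X) * tuttePoly (k / 2)) else 0 with hw
  have hweight : ∀ (X : Type) [Finite X] (r : X), Nat.card X ≤ 2 * n + 1 →
      plantedSum r = w (Nat.card X) := by
    intro X _ r hX
    by_cases hodd : Odd (Nat.card X)
    · obtain ⟨m, hm⟩ := id hodd
      rw [ih m (by omega) X r hm, hw]
      simp only [hodd, if_true]
      rw [hm, Nat.add_sub_cancel, show (2 * m + 1) / 2 = m by omega]
    · rw [plantedSum_of_even r (Nat.not_odd_iff_even.1 hodd), hw]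
      simp only [hodd, if_false]
  have hterm : ∀ Y : {Y : Finset D // s ∈ Y ∧ s' ∉ Y},
      plantedSum (⟨s, Y.2.1⟩ : {x // x ∈ Y.1}) * plantedSum (⟨s', Y.2.2⟩ : {x // x ∉ Y.1}) =
        w Y.1.card * w (2 * n + 2 - Y.1.card) := by
    rintro ⟨Y, hs, hs'⟩
    have h1 : Nat.card {x // x ∈ Y} = Y.card := by simp
    have h2 : Nat.card {x // x ∉ Y} = 2 * n + 2 - Y.card := by
      rw [← hD, ← Nat.card_congr (Equiv.sumCompl (· ∈ Y)), Nat.card_sum, h1]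
      omega
    have h3 : 0 < Y.card := Finset.card_pos.2 ⟨s, hs⟩
    have h4 : 0 < Nat.card {x // x ∉ Y} := Nat.card_pos_iff.2 ⟨⟨⟨s', hs'⟩⟩, inferInstance⟩
    rw [hweight _ _ (h1.trans_le (by omega)), hweight _ _ (h2.trans_le (by omega)), h1, h2]
  rw [finsum_congr hterm, finsum_separating hne hD (fun k => w k * w (2 * n + 2 - k)),
    sum_range_eq_sum_even, Finset.Nat.sum_antidiagonal_eq_sum_range_succ_mk, Finset.mul_sum,
    Finset.mul_sum]
  · refine Finset.sum_congr rfl fun i hi => ?_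
    have hi : i ≤ n := by simpa [Nat.lt_succ_iff] using hi
    have hfac := Nat.choose_mul_factorial_mul_factorial (n := 2 * n) (k := 2 * i) (by omega)
    have h1 : w (2 * i + 1) =
        ((2 * i).factorial : ℤ[X]) * ((1 + Polynomial.X) * tuttePoly i) := by
      simp only [hw]
      rw [if_pos ⟨i, rfl⟩, Nat.add_sub_cancel, show (2 * i + 1) / 2 = i by omega]
    have h2 : w (2 * n + 2 - (2 * i + 1)) =
        ((2 * n - 2 * i).factorial : ℤ[X]) * ((1 + Polynomial.X) * tuttePoly (n - i)) := by
      simp only [hw]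
      rw [if_pos ⟨n - i, by omega⟩, show 2 * n + 2 - (2 * i + 1) - 1 = 2 * n - 2 * i by omega,
        show (2 * n + 2 - (2 * i + 1)) / 2 = n - i by omega]
    rw [h1, h2, ← hfac, nsmul_eq_mul]
    push_cast
    ring
  · intro i
    simp only [hw]
    rw [if_neg (Nat.not_odd_iff_even.2 ⟨i + 1, by omega⟩), zero_mul, smul_zero]

theorem nonIsthmusSum_eq_tuttePoly [DecidableEq D] (ih : PlantedSumEq n)
    (hD : Nat.card D = 2 * n + 2) {s s' : D} (hne : s ≠ s') :
    nonIsthmusSum s s' = ((2 * n).factorial : ℤ[X]) *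
      ((1 + Polynomial.X) * divX ((1 + Polynomial.X) * tuttePoly n)) := by
  have hE : Nat.card {x // x ≠ s'} = 2 * n + 1 := by
    have := Nat.card_congr (optionSubtypeNe s')
    rw [Finite.card_option] at this
    omega
  have hs : optionSubtypeNe s' (some ⟨s, hne⟩) = s := rfl
  have hs' : optionSubtypeNe s' none = s' := rfl
  have h := nonIsthmusSum_equiv (optionSubtypeNe s') (some ⟨s, hne⟩) none
  rw [hs, hs'] at h
  rw [h, nonIsthmusSum_some_none, ih _ _ hE, ← map_natCast C, divX_C_mul]
  ring

theorem mapSum_eq (ih : ∀ m ≤ n, PlantedSumEq m) (hD : Nat.card D = 2 * n + 2) (s : D) :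
    mapSum s = ((2 * n + 1).factorial : ℤ[X]) * tuttePoly (n + 1) := by
  classical
  have hcard : Nat.card {x // x ≠ s} = 2 * n + 1 := by
    have := Nat.card_congr (optionSubtypeNe s)
    rw [Finite.card_option] at this
    omega
  rw [mapSum, finsum_subtype_fiberwise (ι := {x // x ≠ s}) 
    (Q := fun (s' : {x // x ≠ s}) (p : Perm D × Perm D) => p.2 s = s'.1)]
  · have hterm : ∀ s' : {x // x ≠ s},
        ∑ᶠ p : {p : Perm D × Perm D // IsMap p ∧ p.2 s = s'}, weight s p.1 =
          ((2 * n).factorial : ℤ[X]) * tuttePoly (n + 1) := by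
      rintro ⟨s', hs'⟩
      rw [finsum_subtype_eq_add (Q := fun p => orb {p.1, p.2 * swap s s'} = 1), isthmusSum_eq,
        isthmusSum_eq_tuttePoly ih hD hs'.symm, tuttePoly_succ, mul_add, add_comm]
      congr 1
      exact nonIsthmusSum_eq_tuttePoly (ih n le_rfl) hD hs'.symm
    have := Fintype.ofFinite {x // x ≠ s}
    rw [finsum_congr hterm, finsum_eq_sum_of_fintype, Finset.sum_const, Finset.card_univ,
      ← Nat.card_eq_fintype_card, hcard, nsmul_eq_mul, Nat.factorial_succ]
    push_cast
    ring
  · intro p hp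
    exact ⟨⟨p.2 s, hp.fpf s⟩, rfl, fun s' h => Subtype.ext h.symm⟩

theorem plantedSumEq (n : ℕ) : PlantedSumEq n := by
  induction n using Nat.strong_induction_on with
  | _ n ih =>
    classical
    intro X _ r hX
    cases n with
    | zero =>
      have := (Nat.card_eq_one_iff_unique.1 hX).1
      rw [plantedSum_of_subsingleton, tuttePoly_zero]
      simp
    | succ n =>
      have hcard : Nat.card {x // x ≠ r} = 2 * n + 2 := by
        have := Nat.card_congr (optionSubtypeNe r)
        rw [Finite.card_option] at this
        omega
      have : Nonempty {x // x ≠ r} := (Nat.card_pos_iff.1 (by omega)).1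
      have := Fintype.ofFinite {x // x ≠ r}
      have hr : optionSubtypeNe r none = r := rfl
      rw [← hr, plantedSum_equiv, plantedSum_none,
        finsum_congr fun s => by rw [mapSum_eq (fun m hm => ih m (by omega)) hcard],
        finsum_eq_sum_of_fintype, Finset.sum_const, Finset.card_univ,
        ← Nat.card_eq_fintype_card, hcard, nsmul_eq_mul,
        show 2 * (n + 1) = 2 * n + 1 + 1 by ring, Nat.factorial_succ (2 * n + 1)]
      push_cast
      ring

end Recursion

section Counting

theorem numCycles_eq_orb {m : ℕ} (f : Perm (Fin m)) : numCycles f = orb {f} := by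
  classical
  have hcyc : ∀ c : f.cycleFactorsFinset, ∃ x, x ∈ c.1.support := fun c =>
    (mem_cycleFactorsFinset_iff.1 c.2).1.nonempty_support
  choose x hx using hcyc
  have hx' : ∀ c, f.cycleOf (x c) = c := fun c => (cycle_is_cycleOf (hx c) c.2).symm
  have hfx : ∀ c, f (x c) ≠ x c := fun c =>
    mem_support.1 (mem_cycleFactorsFinset_support_le c.2 (hx c))
  have hbij : Function.Bijective (Sum.elim (fun y : Function.fixedPoints f =>
      (⟦y.1⟧ : Quotient (SameCycle.setoid f))) fun c : f.cycleFactorsFinset => ⟦x c⟧) := by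
    constructor
    · rintro (⟨y, hy⟩ | c) (⟨z, hz⟩ | d) h <;> have h : SameCycle f _ _ := Quotient.exact h
      · exact congrArg Sum.inl (Subtype.ext (h.eq_of_left hy))
      · exact absurd (h.apply_eq_self_iff.1 hy) (hfx d)
      · exact absurd (h.apply_eq_self_iff.2 hz) (hfx c)
      · rw [Sum.inr.injEq, Subtype.ext_iff, ← hx', ← hx', h.cycleOf_eq]
    · intro q
      induction q using Quotient.inductionOn with
      | _ y =>
        by_cases hy : f y = y
        · exact ⟨Sum.inl ⟨y, hy⟩, rfl⟩
        · have hc : f.cycleOf y ∈ f.cycleFactorsFinset :=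
            cycleOf_mem_cycleFactorsFinset_iff.2 (mem_support.2 hy)
          refine ⟨Sum.inr ⟨_, hc⟩, Quotient.sound ?_⟩
          have := hx ⟨_, hc⟩
          rw [mem_support_cycleOf_iff] at this
          exact this.1.symm
  rw [orb, orbitSetoid_singleton, ← Nat.card_congr (Equiv.ofBijective _ hbij), Nat.card_sum,
    numCycles, sum_cycleType, cycleType_def]
  have h1 : Nat.card (Function.fixedPoints f) = m - f.support.card := by
    rw [Nat.card_eq_fintype_card, card_fixedPoints, sum_cycleType, Fintype.card_fin]
  rw [h1]
  simp

variable {n : ℕ}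

theorem conn_iff_orb_eq_one {X : Type*} [Nonempty X] {σ α : Perm X} :
    (∀ d e : X, ∃ g ∈ Subgroup.closure ({σ, α} : Set (Perm X)), g d = e) ↔ orb {σ, α} = 1 := by
  constructor
  · intro h
    refine orb_eq_one fun S hS x hx y => ?_
    obtain ⟨g, hg, rfl⟩ := h x y
    have : Inv {g} S := by
      induction hg using Subgroup.closure_induction with
      | mem g hg => exact inv_singleton.2 (hS g hg)
      | one => exact inv_singleton.2 fun _ => Iff.rfl
      | mul g g' _ _ h h' => exact h.mul h'
      | inv g _ h =>
        rw [inv_singleton] at *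
        intro x
        rw [← h, ← Perm.mul_apply, mul_inv_cancel, Perm.one_apply]
    exact (inv_singleton.1 this x).2 hx
  · intro h d e
    refine mem_of_orb_eq_one (S := {e | ∃ g ∈ Subgroup.closure {σ, α}, g d = e}) h ?_ (x := d) ?_ e
    · intro f hf x
      have hf := Subgroup.subset_closure hf
      constructor
      · rintro ⟨g, hg, hx⟩
        exact ⟨f⁻¹ * g, mul_mem (inv_mem hf) hg, by simp [hx]⟩
      · rintro ⟨g, hg, rfl⟩
        exact ⟨f * g, mul_mem hf hg, rfl⟩
    · exact ⟨1, one_mem _, rfl⟩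

theorem _root_.RMap.isMap (M : RMap n) : IsMap (M.σ, M.α) where
  invol := M.inv
  fpf := M.fpf
  conn := by
    have : Nonempty (Fin (2 * n)) := ⟨M.root⟩
    exact conn_iff_orb_eq_one.1 M.conn
  euler := by
    rw [← numCycles_eq_orb, ← numCycles_eq_orb, M.euler, Nat.card_fin]
    ring

/-- The rooted map with given permutations and root. -/
def rmapOfIsMap {p : Perm (Fin (2 * n)) × Perm (Fin (2 * n))} (hp : IsMap p) (r : Fin (2 * n)) :
    RMap n where
  σ := p.1
  α := p.2
  root := r
  inv := hp.invol
  fpf := hp.fpf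
  conn := by
    have : Nonempty (Fin (2 * n)) := ⟨r⟩
    exact conn_iff_orb_eq_one.2 hp.conn
  euler := by
    have := hp.euler
    rw [← numCycles_eq_orb, ← numCycles_eq_orb, Nat.card_fin] at this
    omega

theorem card_rmap : Nat.card (RMap n) =
    Nat.card {p : Perm (Fin (2 * n)) × Perm (Fin (2 * n)) // IsMap p} * (2 * n) := by
  have e : RMap n ≃ {p : Perm (Fin (2 * n)) × Perm (Fin (2 * n)) // IsMap p} × Fin (2 * n) :=
    { toFun := fun M => (⟨_, M.isMap⟩, M.root)
      invFun := fun q => rmapOfIsMap q.1.2 q.2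
      left_inv := fun _ => rfl
      right_inv := fun _ => rfl }
  rw [Nat.card_congr e, Nat.card_prod, Nat.card_fin]

/-- Renaming the darts of a rooted map. -/
def _root_.RMap.transport (e : Perm (Fin (2 * n))) (M : RMap n) : RMap n :=
  rmapOfIsMap ((isMap_permCongr e).2 M.isMap) (e M.root)

theorem rmapIso_iff {M M' : RMap n} : RMapIso M M' ↔ ∃ e, M.transport e = M' := by
  refine exists_congr fun e => ⟨fun ⟨hσ, hα, hr⟩ => ?_, ?_⟩
  · obtain ⟨σ, α, r⟩ := M'
    simp only [RMap.transport, rmapOfIsMap, RMap.mk.injEq]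
    refine ⟨Perm.ext fun d => ?_, Perm.ext fun d => ?_, hr⟩
    · simp [hσ]
    · simp [hα]
  · rintro rfl
    simp [RMap.transport, rmapOfIsMap]

theorem rmapIso_equivalence : Equivalence (@RMapIso n) where
  refl M := ⟨1, by simp⟩
  symm := by
    rintro M M' ⟨e, hσ, hα, hr⟩
    refine ⟨e.symm, fun d => ?_, fun d => ?_, by simp [← hr]⟩
    · rw [symm_apply_eq, hσ, apply_symm_apply]
    · rw [symm_apply_eq, hα, apply_symm_apply]
  trans := by
    rintro M M' M'' ⟨e, hσ, hα, hr⟩ ⟨e', hσ', hα', hr'⟩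
    exact ⟨e' * e, by simp [hσ, hσ'], by simp [hα, hα'], by simp [hr, hr']⟩

theorem _root_.RMap.transport_injective (M : RMap n) :
    Function.Injective fun e => M.transport e := by
  intro e e' h
  have hfix : Inv {M.σ, M.α} {x | e x = e' x} := by
    simp only [RMap.transport, rmapOfIsMap, RMap.mk.injEq] at h
    have key : ∀ f : Perm (Fin (2 * n)), e.permCongr f = e'.permCongr f →
        Inv {f} {x | e x = e' x} := by
      intro f hf
      refine inv_singleton_of_forall_mem fun x (hx : e x = e' x) => ?_
      have := DFunLike.congr_fun hf (e x)
      rw [permCongr_apply, permCongr_apply, symm_apply_apply, hx, symm_apply_apply] at this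
      exact this
    exact inv_pair.2 ⟨key _ h.1, key _ h.2.1⟩
  have hroot : e M.root = e' M.root := congrArg RMap.root h
  exact Perm.ext fun x => mem_of_orb_eq_one M.isMap.conn hfix hroot x

theorem card_quot_rmapIso_mul :
    Nat.card (Quot (@RMapIso n)) * (2 * n).factorial = Nat.card (RMap n) := by
  have hmk : ∀ (e : Perm (Fin (2 * n))) (M : RMap n),
      Quot.mk RMapIso (M.transport e) = Quot.mk RMapIso M := fun e M =>
    (Quot.sound (rmapIso_iff.2 ⟨e, rfl⟩)).symm
  have hbij : Function.Bijective fun q : Quot (@RMapIso n) × Perm (Fin (2 * n)) =>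
      q.1.out.transport q.2 := by
    constructor
    · rintro ⟨q, e⟩ ⟨q', e'⟩ h
      obtain rfl : q = q' := by
        simpa [hmk] using congrArg (Quot.mk RMapIso) h
      exact congrArg (Prod.mk q) (q.out.transport_injective h)
    · intro M
      have h : Quot.mk RMapIso (Quot.mk RMapIso M).out = Quot.mk RMapIso M := Quot.out_eq _
      rw [Quot.eq, rmapIso_equivalence.eqvGen_iff, rmapIso_iff] at h
      obtain ⟨e, he⟩ := h
      exact ⟨(_, e), he⟩
  rw [← Nat.card_congr (Equiv.ofBijective _ hbij), Nat.card_prod, Nat.card_perm, Nat.card_fin]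

theorem coeff_zero_mapSum {D : Type*} [Finite D] (s : D) :
    (mapSum s).coeff 0 = Nat.card {p : Perm D × Perm D // IsMap p} := by
  have := Fintype.ofFinite {p : Perm D × Perm D // IsMap p}
  rw [mapSum, finsum_eq_sum_of_fintype, Polynomial.coeff_zero_eq_eval_zero,
    Polynomial.eval_finsetSum, Nat.card_eq_fintype_card]
  simp [weight]

theorem mapCount_eq_coeff_zero_tuttePoly (n : ℕ) : (mapCount n : ℤ) = (tuttePoly n).coeff 0 := by
  cases n with
  | zero => simp [mapCount, tuttePoly_zero]
  | succ n =>
    have h1 := card_quot_rmapIso_mul (n := n + 1)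
    have h2 := coeff_zero_mapSum (0 : Fin (2 * (n + 1)))
    rw [mapSum_eq (fun m _ => plantedSumEq m) (Nat.card_fin _), Polynomial.coeff_natCast_mul] at h2
    rw [mapCount, if_neg n.succ_ne_zero]
    refine mul_right_cancel₀ (b := ((2 * (n + 1)).factorial : ℤ)) (by positivity) ?_
    rw [card_rmap] at h1
    rw [← Nat.cast_mul, h1, Nat.cast_mul, ← h2, show 2 * (n + 1) = 2 * n + 1 + 1 by ring,
      Nat.factorial_succ (2 * n + 1)]
    push_cast
    ring

end Counting

end PlanarMap

/-- **Tutte.** The number of rooted planar maps with `n` edges is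
`M_n = 2 · 3^n · (2n)! / ((n+2)! · n!)`. -/
theorem tutte_map_count (n : ℕ) :
    mapCount n * (Nat.factorial (n + 2) * Nat.factorial n) =
      2 * 3 ^ n * Nat.factorial (2 * n) := by
  have h := coeff_zero_tuttePoly_mul n
  rw [← PlanarMap.mapCount_eq_coeff_zero_tuttePoly] at h
  exact_mod_cast h
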